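/- For all sufficiently smooth rapidly decaying u, v : ℝ³_ξ → ℝ: (a) ⟨Lu, v⟩ = ⟨u, Lv⟩ and ⟨Lu, u⟩ ≥ 0; (b) the kernel of L equals span{M^{1/2}, ξ₁M^{1/2}, ξ₂M^{1/2}, ξ₃M^{1/2}, |ξ|²M^{1/2}}; (c) ⟨Lu, u⟩ = 0 if and only if u = Pu; (d) there exists κ₀ > 0 (independent of u) such that ⟨Lu, u⟩ ≥ κ₀ |{I−P}u|²_σ. -/

import Mathlib

open MeasureTheory Real

noncomputable section VPL

/-- The velocity/space domain `ℝ³`. -/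
abbrev E3 : Type := EuclideanSpace ℝ (Fin 3)

/-- Japanese bracket `⟨ξ⟩ = (1+|ξ|²)^{1/2}`. -/
def jap (ξ : E3) : ℝ := Real.sqrt (1 + ‖ξ‖ ^ 2)

/-- Normalized global Maxwellian `M(ξ) = (2π)^{-3/2} e^{-|ξ|²/2}`. -/
def Mx (ξ : E3) : ℝ := (2 * π) ^ (-(3 : ℝ) / 2) * Real.exp (-‖ξ‖ ^ 2 / 2)

/-- `M^{1/2}`. -/
def sqrtM (ξ : E3) : ℝ := Real.sqrt (Mx ξ)

/-- Partial derivative in the `i`-th coordinate. -/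
def pd (i : Fin 3) (f : E3 → ℝ) (ξ : E3) : ℝ :=
  fderiv ℝ f ξ (EuclideanSpace.single i 1)

/-- The Landau collision kernel `B^{ij}(ξ) = (δ_{ij} - ξ_iξ_j/|ξ|²)|ξ|^{γ+2}`. -/
def Bij (γ : ℝ) (i j : Fin 3) (ξ : E3) : ℝ :=
  ((if i = j then (1 : ℝ) else 0) - ξ i * ξ j / ‖ξ‖ ^ 2) * ‖ξ‖ ^ (γ + 2)

/-- The Landau collision operator `Q(f,g)`. -/
def Qop (γ : ℝ) (f g : E3 → ℝ) (ξ : E3) : ℝ :=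
  ∑ i : Fin 3, ∑ j : Fin 3,
    pd i (fun ζ => ∫ ξ', Bij γ i j (ζ - ξ') * (f ξ' * pd j g ζ - pd j f ξ' * g ζ)) ξ

/-- The linearized Landau operator `L`. -/
def Lop (γ : ℝ) (u : E3 → ℝ) (ξ : E3) : ℝ :=
  -((Mx ξ) ^ (-(1 : ℝ) / 2)) *
    (Qop γ Mx (fun ζ => sqrtM ζ * u ζ) ξ + Qop γ (fun ζ => sqrtM ζ * u ζ) Mx ξ)

/-- The nonlinear term `Γ(u₁,u₂)`. -/
def Gam (γ : ℝ) (u₁ u₂ : E3 → ℝ) (ξ : E3) : ℝ :=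
  (Mx ξ) ^ (-(1 : ℝ) / 2) *
    Qop γ (fun ζ => sqrtM ζ * u₁ ζ) (fun ζ => sqrtM ζ * u₂ ζ) ξ

/-- The Landau collision frequency `σ^{ij} = B^{ij} ∗ M`. -/
def sigmaij (γ : ℝ) (i j : Fin 3) (ξ : E3) : ℝ := ∫ ξ', Bij γ i j (ξ - ξ') * Mx ξ'

/-- The time–velocity weight `w_{τ,λ}(t,ξ) = ⟨ξ⟩^{(γ+2)τ} exp(λ⟨ξ⟩²/(1+t)^ϑ)`. -/
def wt (γ τ lam ϑ t : ℝ) (ξ : E3) : ℝ :=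
  jap ξ ^ ((γ + 2) * τ) * Real.exp (lam * jap ξ ^ 2 / (1 + t) ^ ϑ)

/-- Weighted `L²_ξ` norm squared `|u|²_{τ,λ}`. -/
def vnormSq (γ τ lam ϑ t : ℝ) (u : E3 → ℝ) : ℝ :=
  ∫ ξ, (wt γ τ lam ϑ t ξ) ^ 2 * (u ξ) ^ 2

/-- Weighted dissipation norm squared `|u|²_{σ,τ,λ}`. -/
def vsigSq (γ τ lam ϑ t : ℝ) (u : E3 → ℝ) : ℝ :=
  ∑ i : Fin 3, ∑ j : Fin 3, ∫ ξ,
    (wt γ τ lam ϑ t ξ) ^ 2 *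
      (sigmaij γ i j ξ * pd i u ξ * pd j u ξ +
        sigmaij γ i j ξ * (ξ i / 2) * (ξ j / 2) * (u ξ) ^ 2)

/-- `L²_ξ` inner product. -/
def ipv (u v : E3 → ℝ) : ℝ := ∫ ξ, u ξ * v ξ

/-- Macroscopic coefficient `a`. -/
def aC (u : E3 → ℝ) : ℝ := ∫ ξ, sqrtM ξ * u ξ

/-- Macroscopic coefficient `b_i`. -/
def bC (i : Fin 3) (u : E3 → ℝ) : ℝ := ∫ ξ, ξ i * sqrtM ξ * u ξ

/-- Macroscopic coefficient `c`. -/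
def cC (u : E3 → ℝ) : ℝ := (1 / 6) * ∫ ξ, (‖ξ‖ ^ 2 - 3) * sqrtM ξ * u ξ

/-- Macroscopic projection `Pu`. -/
def Pv (u : E3 → ℝ) (ξ : E3) : ℝ :=
  (aC u + (∑ i : Fin 3, bC i u * ξ i) + cC u * (‖ξ‖ ^ 2 - 3)) * sqrtM ξ

/-- Microscopic part `{I - P}u`. -/
def IPv (u : E3 → ℝ) (ξ : E3) : ℝ := u ξ - Pv u ξ

/-- Multi-indices on `ℝ³` as triples of naturals. -/
abbrev MIdx : Type := ℕ × ℕ × ℕ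

/-- Length `|β|` of a multi-index. -/
def deg (β : MIdx) : ℕ := β.1 + β.2.1 + β.2.2

/-- Iterated partial derivative `∂^β`. -/
def pdM (β : MIdx) (f : E3 → ℝ) : E3 → ℝ :=
  (pd 0)^[β.1] ((pd 1)^[β.2.1] ((pd 2)^[β.2.2] f))

/-- The finite set of multi-indices of length at most `N`. -/
def midx (N : ℕ) : Finset MIdx :=
  ((Finset.range (N + 1)) ×ˢ (Finset.range (N + 1)) ×ˢ (Finset.range (N + 1))).filter
    fun β => deg β ≤ N

/-- Pairs `(α,β)` of multi-indices with `|α|+|β| ≤ N`. -/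
def midxP (N : ℕ) : Finset (MIdx × MIdx) :=
  ((midx N) ×ˢ (midx N)).filter fun p => deg p.1 + deg p.2 ≤ N

/-- Partial derivative in the space variable of `u = u(x,ξ)`. -/
def pdx (i : Fin 3) (u : E3 → E3 → ℝ) : E3 → E3 → ℝ :=
  fun x ξ => fderiv ℝ (fun y => u y ξ) x (EuclideanSpace.single i 1)

/-- Iterated space derivative `∂^α_x` of `u = u(x,ξ)`. -/
def pdxM (α : MIdx) (u : E3 → E3 → ℝ) : E3 → E3 → ℝ :=
  (pdx 0)^[α.1] ((pdx 1)^[α.2.1] ((pdx 2)^[α.2.2] u))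

/-- Mixed derivative `∂^α_β = ∂^α_x ∂^β_ξ` of `u = u(x,ξ)`. -/
def pdab (α β : MIdx) (u : E3 → E3 → ℝ) : E3 → E3 → ℝ :=
  fun x => pdM β (pdxM α u x)

/-- Weighted `L²_{x,ξ}` norm squared `‖u‖²_{τ,λ}`. -/
def xnormSq (γ τ lam ϑ t : ℝ) (u : E3 → E3 → ℝ) : ℝ := ∫ x, vnormSq γ τ lam ϑ t (u x)

/-- Weighted dissipation norm squared `‖u‖²_{σ,τ,λ}`. -/
def xsigSq (γ τ lam ϑ t : ℝ) (u : E3 → E3 → ℝ) : ℝ := ∫ x, vsigSq γ τ lam ϑ t (u x)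

/-- `L²_{x,ξ}` inner product. -/
def ipx (u v : E3 → E3 → ℝ) : ℝ := ∫ x, ∫ ξ, u x ξ * v x ξ

/-- `a(x)`. -/
def aF (u : E3 → E3 → ℝ) (x : E3) : ℝ := aC (u x)

/-- `b_i(x)`. -/
def bF (i : Fin 3) (u : E3 → E3 → ℝ) (x : E3) : ℝ := bC i (u x)

/-- `c(x)`. -/
def cF (u : E3 → E3 → ℝ) (x : E3) : ℝ := cC (u x)

/-- `{I-P}u` for `u = u(x,ξ)`. -/
def IPx (u : E3 → E3 → ℝ) : E3 → E3 → ℝ := fun x => IPv (u x)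

/-- The Poisson potential `φ = -(4π|x|)^{-1} ∗ ρ`. -/
def poisson (ρ : E3 → ℝ) (x : E3) : ℝ := -∫ y, ρ y / (4 * π * ‖x - y‖)

/-- The self-consistent potential of `u`. -/
def phiF (u : E3 → E3 → ℝ) : E3 → ℝ := poisson (aF u)

/-- `L²_x` norm squared. -/
def L2Sq (f : E3 → ℝ) : ℝ := ∫ x, (f x) ^ 2

/-- `H^N_x` norm squared. -/
def HsobSq (N : ℕ) (f : E3 → ℝ) : ℝ := ∑ α ∈ midx N, L2Sq (pdM α f)

/-- `‖∇_x f‖²_{H^N}`. -/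
def gradSobSq (N : ℕ) (f : E3 → ℝ) : ℝ := ∑ i : Fin 3, HsobSq N (pd i f)

/-- `‖∇_x (a,b,c)‖²_{H^N}`. -/
def abcGradSobSq (N : ℕ) (u : E3 → E3 → ℝ) : ℝ :=
  gradSobSq N (aF u) + (∑ i : Fin 3, gradSobSq N (bF i u)) + gradSobSq N (cF u)

/-- `‖∇²_x f‖²_{H^N}`. -/
def hessSobSq (N : ℕ) (f : E3 → ℝ) : ℝ :=
  ∑ i : Fin 3, ∑ j : Fin 3, HsobSq N (pd i (pd j f))

/-- Full instant energy norm `|||u(t)|||²_{N,ℓ,λ}`. -/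
def triSq (γ : ℝ) (N : ℕ) (ℓ lam ϑ t : ℝ) (u : E3 → E3 → ℝ) : ℝ :=
  (∑ p ∈ midxP N, xnormSq γ ((deg p.2 : ℝ) - ℓ) lam ϑ t (pdab p.1 p.2 u))
    + gradSobSq N (phiF u)

/-- `Z₁ = L²_ξ(L¹_x)` norm. -/
def Z1 (u : E3 → E3 → ℝ) : ℝ := Real.sqrt (∫ ξ, (∫ x, |u x ξ|) ^ 2)

/-- Un-currying of a Schwartz function on `ℝ³_x × ℝ³_ξ`. -/
def uc (u : SchwartzMap (E3 × E3) ℝ) : E3 → E3 → ℝ := fun x ξ => u (x, ξ)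

end VPL

/-!
Put `A u = ∇u + (ξ/2) u = √M ∇(u/√M)` and `w(ξ, ξ') = √M(ξ') Au(ξ) - √M(ξ) Au(ξ')`. Integrating by
parts and symmetrizing in the two velocities, `⟨Lu, u⟩ = ½ ∬ ∑ᵢⱼ Bⁱʲ(ξ - ξ') wᵢ wⱼ`, which is
nonnegative and unchanged when a collision invariant is subtracted from `u`, because its `w` is
parallel to `ξ - ξ'`.

For coercivity, `|z|^(γ+2) |Π w|² = |z|^γ |z ∧ w|²` and, since `γ ≤ 0`, `|ξ - ξ'|^γ` is bounded
below by a multiple of `⟨ξ⟩^γ ⟨ξ'⟩^γ`. With this product weight the double integral of `|z ∧ w|²`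
is computed exactly: once the collision invariant matching the weighted averages of `Au` is
removed from `u`, it dominates `∫ ⟨ξ⟩^γ (|Au|² + |ξ ∧ Au|²)`. A Poincaré inequality, obtained by
joining `(ξ, ξ')` to `(ξ', -ξ)` through rotations of the product space, adds `∫ ⟨ξ⟩^γ ⟨ξ⟩² u²`,
and the resulting norm controls `|·|_σ` because `B ∗ M` grows like `⟨ξ⟩^(γ+2)` only in directions
orthogonal to `ξ`. Finally `I - P` is bounded in this norm and annihilates collision invariants.
-/

open scoped SchwartzMap ContDiff LineDeriv Convolution
open Function (HasTemperateGrowth)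
open ContinuousLinearMap (lsmul)

namespace Landau

section Schwartz

variable {E F : Type*} [NormedAddCommGroup E] [NormedSpace ℝ E]
  [NormedAddCommGroup F] [NormedSpace ℝ F]

/-- A function is Schwartz if it underlies an element of `𝓢(E, F)`. The unbundled predicate lets
functions given by explicit formulas be recognised as test functions. -/
def IsSchwartz (f : E → F) : Prop := ∃ u : 𝓢(E, F), ⇑u = f

theorem isSchwartz_coe (u : 𝓢(E, F)) : IsSchwartz ⇑u := ⟨u, rfl⟩

namespace IsSchwartz

theorem of_decay {f : E → F} (hf : ContDiff ℝ ∞ f)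
    (hdecay : ∀ k n : ℕ, ∃ C, ∀ x, ‖x‖ ^ k * ‖iteratedFDeriv ℝ n f x‖ ≤ C) : IsSchwartz f :=
  ⟨⟨f, hf, hdecay⟩, rfl⟩

variable {f g : E → F}

theorem add (hf : IsSchwartz f) (hg : IsSchwartz g) : IsSchwartz fun x ↦ f x + g x := by
  obtain ⟨u, rfl⟩ := hf
  obtain ⟨v, rfl⟩ := hg
  exact ⟨u + v, rfl⟩

theorem sub (hf : IsSchwartz f) (hg : IsSchwartz g) : IsSchwartz fun x ↦ f x - g x := by
  obtain ⟨u, rfl⟩ := hf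
  obtain ⟨v, rfl⟩ := hg
  exact ⟨u - v, rfl⟩

theorem sum {ι : Type*} (s : Finset ι) {f : ι → E → F} (hf : ∀ i, IsSchwartz (f i)) :
    IsSchwartz fun x ↦ ∑ i ∈ s, f i x := by
  choose u hu using hf
  exact ⟨∑ i ∈ s, u i, by simp [← hu, funext_iff]⟩

theorem smul {a : E → ℝ} (ha : a.HasTemperateGrowth) (hf : IsSchwartz f) :
    IsSchwartz fun x ↦ a x • f x := by
  obtain ⟨u, rfl⟩ := hf
  exact ⟨SchwartzMap.smulLeftCLM F a u, funext fun x ↦ SchwartzMap.smulLeftCLM_apply_apply ha u x⟩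

theorem hasTemperateGrowth (hf : IsSchwartz f) : f.HasTemperateGrowth := by
  obtain ⟨u, rfl⟩ := hf
  exact u.hasTemperateGrowth

theorem continuous (hf : IsSchwartz f) : Continuous f := by
  obtain ⟨u, rfl⟩ := hf
  exact u.continuous

theorem differentiable (hf : IsSchwartz f) : Differentiable ℝ f := by
  obtain ⟨u, rfl⟩ := hf
  exact u.differentiable

theorem fderiv_apply (hf : IsSchwartz f) (v : E) : IsSchwartz fun x ↦ fderiv ℝ f x v := by
  obtain ⟨u, rfl⟩ := hf
  exact ⟨∂_{v} u, rfl⟩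

theorem exists_norm_le_div_pow (hf : IsSchwartz f) (k : ℕ) :
    ∃ C, 0 ≤ C ∧ ∀ x, ‖f x‖ ≤ C / (1 + ‖x‖) ^ k := by
  obtain ⟨u, rfl⟩ := hf
  have hbound := fun x ↦ SchwartzMap.one_add_le_sup_seminorm_apply (𝕜 := ℝ) (m := (k, 0))
    (k := k) (n := 0) le_rfl le_rfl u x
  simp only [norm_iteratedFDeriv_zero] at hbound
  exact ⟨_, (by positivity : (0 : ℝ) ≤ _).trans (hbound 0), fun x ↦ by
    rw [le_div_iff₀' (by positivity)]; exact hbound x⟩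

variable {a b : E → ℝ}

theorem mul_left (ha : a.HasTemperateGrowth) (hb : IsSchwartz b) :
    IsSchwartz fun x ↦ a x * b x :=
  hb.smul ha

theorem mul_right (ha : IsSchwartz a) (hb : b.HasTemperateGrowth) :
    IsSchwartz fun x ↦ a x * b x := by
  simpa only [mul_comm] using ha.mul_left hb

theorem mul (ha : IsSchwartz a) (hb : IsSchwartz b) : IsSchwartz fun x ↦ a x * b x :=
  ha.mul_right hb.hasTemperateGrowth

theorem const_mul (c : ℝ) (hb : IsSchwartz b) : IsSchwartz fun x ↦ c * b x :=
  hb.mul_left (.const c)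

section Measure

variable [MeasurableSpace E] [BorelSpace E] [SecondCountableTopology E] {μ : Measure E}
  [μ.HasTemperateGrowth]

theorem integrable (hf : IsSchwartz f) : Integrable f μ := by
  obtain ⟨u, rfl⟩ := hf
  exact u.integrable

theorem memLp_two (hf : IsSchwartz f) : MemLp f 2 μ := by
  obtain ⟨u, rfl⟩ := hf
  exact u.memLp 2 μ

end Measure

theorem integral_mul_fderiv [FiniteDimensional ℝ E] [MeasurableSpace E] [BorelSpace E]
    {μ : Measure E} [μ.IsAddHaarMeasure] (ha : IsSchwartz a) (hb : IsSchwartz b) (v : E) :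
    ∫ x, a x * fderiv ℝ b x v ∂μ = -∫ x, fderiv ℝ a x v * b x ∂μ := by
  obtain ⟨u, rfl⟩ := ha
  obtain ⟨w, rfl⟩ := hb
  exact SchwartzMap.integral_mul_lineDerivOp_right_eq_neg_left u w v

end IsSchwartz

end Schwartz

theorem one_add_norm_sub_le_mul {E : Type*} [NormedAddCommGroup E] (x y : E) :
    1 + ‖x - y‖ ≤ (1 + ‖x‖) * (1 + ‖y‖) := by
  nlinarith [norm_sub_le x y, norm_nonneg x, norm_nonneg y]

section Schwartz

universe u

variable {E F : Type u} [NormedAddCommGroup E] [NormedSpace ℝ E]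
  [NormedAddCommGroup F] [NormedSpace ℝ F] {f : E → F}

theorem IsSchwartz.fderiv (hf : IsSchwartz f) : IsSchwartz (fderiv ℝ f) := by
  obtain ⟨u, rfl⟩ := hf
  exact ⟨SchwartzMap.fderivCLM ℝ E F u, rfl⟩

theorem IsSchwartz.exists_norm_smul_comp_sub_le (hf : IsSchwartz f) (N : ℕ) :
    ∃ C, 0 ≤ C ∧ ∀ (a : ℝ) (x z : E),
      ‖a • f (x - z)‖ ≤ C * (1 + ‖x‖) ^ N * ‖a / (1 + ‖z‖) ^ N‖ := by
  obtain ⟨C, hC0, hC⟩ := hf.exists_norm_le_div_pow N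
  refine ⟨C, hC0, fun a x z ↦ ?_⟩
  have hpeetre : (1 + ‖z‖) ^ N ≤ (1 + ‖x‖) ^ N * (1 + ‖x - z‖) ^ N := by
    rw [← mul_pow]
    exact pow_le_pow_left₀ (by positivity)
      (by simpa only [sub_sub_cancel] using one_add_norm_sub_le_mul x (x - z)) N
  calc ‖a • f (x - z)‖ = |a| * ‖f (x - z)‖ := norm_smul _ _
    _ ≤ |a| * (C / (1 + ‖x - z‖) ^ N) := by gcongr; exact hC _
    _ ≤ |a| * (C * (1 + ‖x‖) ^ N / (1 + ‖z‖) ^ N) := by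
        refine mul_le_mul_of_nonneg_left ?_ (abs_nonneg a)
        rw [div_le_div_iff₀ (by positivity) (by positivity), mul_assoc]
        exact mul_le_mul_of_nonneg_left hpeetre hC0
    _ = C * (1 + ‖x‖) ^ N * ‖a / (1 + ‖z‖) ^ N‖ := by
        rw [norm_div, norm_pow, Real.norm_of_nonneg (by positivity : 0 ≤ 1 + ‖z‖),
          Real.norm_eq_abs]
        ring

theorem IsSchwartz.integrable_one_add_norm_pow_mul [MeasurableSpace E] [BorelSpace E]
    [SecondCountableTopology E] {μ : Measure E} [μ.HasTemperateGrowth] {b : E → ℝ}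
    (hb : IsSchwartz b) (N : ℕ) : Integrable (fun x ↦ (1 + ‖x‖) ^ N * b x) μ := by
  obtain ⟨C, -, hC⟩ := hb.exists_norm_le_div_pow (N + μ.integrablePower)
  refine ((Measure.integrable_pow_neg_integrablePower μ).const_mul C).mono'
    (Continuous.aestronglyMeasurable ?_) (.of_forall fun x ↦ ?_)
  · have := hb.continuous
    fun_prop
  · rw [norm_mul, norm_pow, Real.norm_of_nonneg (by positivity : 0 ≤ 1 + ‖x‖)]
    calc (1 + ‖x‖) ^ N * ‖b x‖
        ≤ (1 + ‖x‖) ^ N * (C / (1 + ‖x‖) ^ (N + μ.integrablePower)) := by gcongr; exact hC x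
      _ = C * (1 + ‖x‖) ^ (-(μ.integrablePower : ℝ)) := by
        rw [pow_add, Real.rpow_neg (by positivity), Real.rpow_natCast]
        field_simp

end Schwartz

section Convolution

universe u

variable {E F : Type u} [NormedAddCommGroup E] [MeasurableSpace E] {μ : Measure E} {k : E → ℝ}

/-- A kernel that is integrable against some negative power of `1 + ‖z‖`; this is what makes its
convolution with Schwartz functions converge. -/
def IsTemperedKernel (k : E → ℝ) (μ : Measure E) : Prop :=
  ∃ N : ℕ, Integrable (fun z ↦ k z / (1 + ‖z‖) ^ N) μ

section Measurable

variable [BorelSpace E]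

theorem IsTemperedKernel.aestronglyMeasurable (hk : IsTemperedKernel k μ) :
    AEStronglyMeasurable k μ := by
  obtain ⟨N, hN⟩ := hk
  have hweight : StronglyMeasurable fun z : E ↦ (1 + ‖z‖) ^ N :=
    (measurable_norm.const_add 1).pow_const N |>.stronglyMeasurable
  refine (hN.aestronglyMeasurable.mul hweight.aestronglyMeasurable).congr (.of_forall fun z ↦ ?_)
  exact div_mul_cancel₀ _ (by positivity)

theorem IsTemperedKernel.of_abs_le {l : E → ℝ} (hl : IsTemperedKernel l μ)
    (hk : AEStronglyMeasurable k μ) {C : ℝ} (hkl : ∀ z, |k z| ≤ C * l z) :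
    IsTemperedKernel k μ := by
  obtain ⟨N, hN⟩ := hl
  have hweight : StronglyMeasurable fun z : E ↦ (1 + ‖z‖) ^ N :=
    (measurable_norm.const_add 1).pow_const N |>.stronglyMeasurable
  refine ⟨N, (hN.const_mul C).mono' (hk.div₀ hweight.aestronglyMeasurable) (.of_forall fun z ↦ ?_)⟩
  have hpos : 0 < (1 + ‖z‖) ^ N := by positivity
  rw [Real.norm_eq_abs, abs_div, abs_of_pos hpos, ← mul_div_assoc]
  exact div_le_div_of_nonneg_right (hkl z) hpos.le

end Measurable

variable [NormedSpace ℝ E] [NormedAddCommGroup F] [NormedSpace ℝ F] {f : E → F}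

theorem IsTemperedKernel.exists_norm_convolution_le (hk : IsTemperedKernel k μ)
    (hf : IsSchwartz f) :
    ∃ (N : ℕ) (C : ℝ), ∀ x, ‖(k ⋆[lsmul ℝ ℝ, μ] f) x‖ ≤ C * (1 + ‖x‖) ^ N := by
  obtain ⟨N, hN⟩ := id hk
  obtain ⟨C, -, hC⟩ := hf.exists_norm_smul_comp_sub_le N
  refine ⟨N, C * ∫ z, ‖k z / (1 + ‖z‖) ^ N‖ ∂μ, fun x ↦ ?_⟩
  refine (norm_integral_le_of_norm_le (hN.norm.const_mul (C * (1 + ‖x‖) ^ N))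
    (.of_forall fun z ↦ hC (k z) x z)).trans_eq ?_
  rw [integral_const_mul]
  ring

variable [BorelSpace E] [FiniteDimensional ℝ E]

theorem IsTemperedKernel.integrable_smul_comp_sub (hk : IsTemperedKernel k μ)
    (hf : IsSchwartz f) (x : E) : Integrable (fun z ↦ k z • f (x - z)) μ := by
  obtain ⟨N, hN⟩ := id hk
  obtain ⟨C, -, hC⟩ := hf.exists_norm_smul_comp_sub_le N
  refine (hN.norm.const_mul (C * (1 + ‖x‖) ^ N)).mono' ?_ (.of_forall fun z ↦ hC (k z) x z)
  exact hk.aestronglyMeasurable.smul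
    (hf.continuous.comp (continuous_const.sub continuous_id)).aestronglyMeasurable

theorem IsTemperedKernel.hasFDerivAt_convolution (hk : IsTemperedKernel k μ)
    (hf : IsSchwartz f) (x : E) :
    HasFDerivAt (k ⋆[lsmul ℝ ℝ, μ] f) ((k ⋆[lsmul ℝ ℝ, μ] (_root_.fderiv ℝ f)) x) x := by
  obtain ⟨N, hN⟩ := id hk
  obtain ⟨C, hC0, hC⟩ := hf.fderiv.exists_norm_smul_comp_sub_le N
  refine hasFDerivAt_integral_of_dominated_of_fderiv_le
    (bound := fun z ↦ C * (1 + (‖x‖ + 1)) ^ N * ‖k z / (1 + ‖z‖) ^ N‖)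
    (Metric.ball_mem_nhds x one_pos)
    (.of_forall fun y ↦ (hk.integrable_smul_comp_sub hf y).aestronglyMeasurable)
    (hk.integrable_smul_comp_sub hf x)
    (hk.integrable_smul_comp_sub hf.fderiv x).aestronglyMeasurable
    (.of_forall fun z y hy ↦ (hC (k z) y z).trans ?_) (hN.norm.const_mul _)
    (.of_forall fun z y _ ↦ ?_)
  · have hy' : ‖y‖ ≤ ‖x‖ + 1 := by
      linarith [norm_le_norm_add_norm_sub x y, norm_sub_rev x y, mem_ball_iff_norm.mp hy]
    gcongr
  · exact ((hasFDerivAt_comp_sub z).mpr (hf.differentiable (y - z)).hasFDerivAt).const_smul (k z)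

theorem IsTemperedKernel.fderiv_convolution (hk : IsTemperedKernel k μ) (hf : IsSchwartz f) :
    fderiv ℝ (k ⋆[lsmul ℝ ℝ, μ] f) = k ⋆[lsmul ℝ ℝ, μ] (fderiv ℝ f) :=
  funext fun x ↦ (hk.hasFDerivAt_convolution hf x).fderiv

theorem IsTemperedKernel.hasTemperateGrowth_convolution (hk : IsTemperedKernel k μ)
    (hf : IsSchwartz f) : (k ⋆[lsmul ℝ ℝ, μ] f).HasTemperateGrowth := by
  refine ⟨contDiff_infty.mpr fun n ↦ ?_, fun n ↦ ?_⟩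
  · induction n generalizing F with
    | zero =>
      exact contDiff_zero.mpr <| continuous_iff_continuousAt.mpr fun x ↦
        (hk.hasFDerivAt_convolution hf x).continuousAt
    | succ n ih =>
      rw [Nat.cast_succ, contDiff_succ_iff_fderiv, hk.fderiv_convolution hf]
      exact ⟨fun x ↦ (hk.hasFDerivAt_convolution hf x).differentiableAt, by simp, ih hf.fderiv⟩
  · induction n generalizing F with
    | zero =>
      obtain ⟨N, C, hC⟩ := hk.exists_norm_convolution_le hf
      exact ⟨N, C, fun x ↦ norm_iteratedFDeriv_zero.trans_le (hC x)⟩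
    | succ n ih =>
      obtain ⟨N, C, hC⟩ := ih hf.fderiv
      refine ⟨N, C, fun x ↦ ?_⟩
      rw [← norm_iteratedFDeriv_fderiv, hk.fderiv_convolution hf]
      exact hC x

theorem IsTemperedKernel.integrable_prod [μ.IsAddHaarMeasure] (hk : IsTemperedKernel k μ)
    {a b : E → ℝ} (ha : IsSchwartz a) (hb : IsSchwartz b) :
    Integrable (fun p : E × E ↦ k (p.1 - p.2) * (a p.1 * b p.2)) (μ.prod μ) := by
  obtain ⟨N, hN⟩ := hk
  obtain ⟨C, hC0, hC⟩ := ha.exists_norm_le_div_pow N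
  have hprod := (hb.integrable_one_add_norm_pow_mul (μ := μ) N).convolution_integrand
    (lsmul ℝ ℝ) hN
  have hfactor : ∀ p : E × E,
      ‖a p.1 * (1 + ‖p.1 - p.2‖) ^ N / (1 + ‖p.2‖) ^ N‖ ≤ C := fun p ↦ by
    have hpeetre : (1 + ‖p.1 - p.2‖) ^ N ≤ (1 + ‖p.1‖) ^ N * (1 + ‖p.2‖) ^ N := by
      rw [← mul_pow]
      exact pow_le_pow_left₀ (by positivity) (one_add_norm_sub_le_mul _ _) N
    rw [norm_div, norm_mul, norm_pow, norm_pow, Real.norm_of_nonneg (by positivity : 0 ≤ 1 + ‖p.2‖),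
      Real.norm_of_nonneg (by positivity : 0 ≤ 1 + ‖p.1 - p.2‖), div_le_iff₀ (by positivity)]
    calc ‖a p.1‖ * (1 + ‖p.1 - p.2‖) ^ N
        ≤ C / (1 + ‖p.1‖) ^ N * ((1 + ‖p.1‖) ^ N * (1 + ‖p.2‖) ^ N) := by
          gcongr; exact hC _
      _ = C * (1 + ‖p.2‖) ^ N := by field_simp
  refine (hprod.mul_bdd (Measurable.aestronglyMeasurable ?_) (.of_forall hfactor)).congr
    (.of_forall fun p ↦ ?_)
  · have := ha.continuous.measurable
    fun_prop
  · simp only [ContinuousLinearMap.lsmul_apply, smul_eq_mul]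
    field_simp

end Convolution

section Gaussian

universe u

variable {E F : Type u} [NormedAddCommGroup E] [NormedAddCommGroup F] [NormedSpace ℝ F]

theorem hasTemperateGrowth_fderiv [NormedSpace ℝ E] {P : E → F} (hP : P.HasTemperateGrowth) :
    (fderiv ℝ P).HasTemperateGrowth := by
  refine ⟨contDiff_infty_iff_fderiv.mp hP.1 |>.2, fun n ↦ ?_⟩
  simpa only [norm_iteratedFDeriv_fderiv] using hP.2 (n + 1)

theorem exists_one_add_pow_mul_exp_neg_mul_sq_le {c : ℝ} (hc : 0 < c) (j : ℕ) :
    ∃ C, ∀ t : ℝ, 0 ≤ t → (1 + t) ^ j * Real.exp (-c * t ^ 2) ≤ C := by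
  refine ⟨j.factorial * (2 / c) ^ j * Real.exp c, fun t ht ↦ ?_⟩
  have hexp := Real.pow_div_factorial_le_exp (c * (1 + t ^ 2)) (by positivity) j
  have hfac : (0 : ℝ) < j.factorial := mod_cast j.factorial_pos
  rw [div_le_iff₀' hfac] at hexp
  calc (1 + t) ^ j * Real.exp (-c * t ^ 2)
      ≤ (2 / c * (c * (1 + t ^ 2))) ^ j * Real.exp (-c * t ^ 2) := by
        gcongr
        field_simp
        nlinarith [sq_nonneg (t - 1)]
    _ ≤ (2 / c) ^ j * (j.factorial * Real.exp (c * (1 + t ^ 2))) * Real.exp (-c * t ^ 2) := by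
        rw [mul_pow]
        gcongr
    _ = j.factorial * (2 / c) ^ j * Real.exp c := by
        rw [show c * (1 + t ^ 2) = c + c * t ^ 2 by ring, Real.exp_add, neg_mul, Real.exp_neg]
        field_simp

variable [InnerProductSpace ℝ E]

theorem hasFDerivAt_exp_neg_mul_norm_sq_smul (c : ℝ) {P : E → F} (hP : Differentiable ℝ P) (x : E) :
    HasFDerivAt (fun y ↦ Real.exp (-c * ‖y‖ ^ 2) • P y)
      (Real.exp (-c * ‖x‖ ^ 2) •
        (fderiv ℝ P x + (-2 * c) • (innerSL ℝ x).smulRight (P x))) x := by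
  have hnorm : HasFDerivAt (fun y : E ↦ -c * ‖y‖ ^ 2) (-c • (2 • innerSL ℝ x)) x :=
    (hasStrictFDerivAt_norm_sq x).hasFDerivAt.const_mul (-c)
  refine (hnorm.exp.smul (hP x).hasFDerivAt).congr_fderiv ?_
  ext v
  simp [smul_smul]
  module

theorem isSchwartz_exp_neg_mul_norm_sq_smul {c : ℝ} (hc : 0 < c) {P : E → F}
    (hP : P.HasTemperateGrowth) : IsSchwartz fun x ↦ Real.exp (-c * ‖x‖ ^ 2) • P x := by
  refine .of_decay ?_ fun k n ↦ ?_
  · exact ((contDiff_const.mul (contDiff_norm_sq ℝ)).exp).smul hP.1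
  · induction n generalizing F with
    | zero =>
      obtain ⟨m, C, hC⟩ := hP.2 0
      simp only [norm_iteratedFDeriv_zero] at hC ⊢
      obtain ⟨D, hD⟩ := exists_one_add_pow_mul_exp_neg_mul_sq_le hc (k + m)
      have hC0 : 0 ≤ C := by simpa using (norm_nonneg _).trans (hC 0)
      refine ⟨C * D, fun x ↦ ?_⟩
      rw [norm_smul, Real.norm_of_nonneg (Real.exp_nonneg _)]
      calc ‖x‖ ^ k * (Real.exp (-c * ‖x‖ ^ 2) * ‖P x‖)
          ≤ (1 + ‖x‖) ^ k * (Real.exp (-c * ‖x‖ ^ 2) * (C * (1 + ‖x‖) ^ m)) := by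
            gcongr
            · linarith
            · exact hC x
        _ = C * ((1 + ‖x‖) ^ (k + m) * Real.exp (-c * ‖x‖ ^ 2)) := by ring
        _ ≤ C * D := mul_le_mul_of_nonneg_left (hD _ (norm_nonneg x)) hC0
    | succ n ih =>
      have hderiv : fderiv ℝ (fun x ↦ Real.exp (-c * ‖x‖ ^ 2) • P x) = fun x ↦
          Real.exp (-c * ‖x‖ ^ 2) •
            (fderiv ℝ P x + (-2 * c) • (innerSL ℝ x).smulRight (P x)) :=
        funext fun x ↦ (hasFDerivAt_exp_neg_mul_norm_sq_smul c
          (hP.1.differentiable (by simp)) x).fderiv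
      have hsmulRight : (fun x ↦ (innerSL ℝ x).smulRight (P x)).HasTemperateGrowth :=
        (ContinuousLinearMap.smulRightL ℝ E F).bilinear_hasTemperateGrowth
          (innerSL ℝ (E := E)).hasTemperateGrowth hP
      have hP' : (fun x ↦ fderiv ℝ P x +
          (-2 * c) • (innerSL ℝ x).smulRight (P x)).HasTemperateGrowth :=
        (hasTemperateGrowth_fderiv hP).add ((HasTemperateGrowth.const (-2 * c)).smul hsmulRight)
      simpa only [← norm_iteratedFDeriv_fderiv (𝕜 := ℝ), hderiv] using ih hP'

end Gaussian

section PartialDerivatives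

variable {f g : E3 → ℝ} {x : E3} (i : Fin 3)

theorem pd_add (hf : DifferentiableAt ℝ f x) (hg : DifferentiableAt ℝ g x) :
    pd i (fun y ↦ f y + g y) x = pd i f x + pd i g x := by
  simp [pd, fderiv_fun_add hf hg]

theorem pd_sub (hf : DifferentiableAt ℝ f x) (hg : DifferentiableAt ℝ g x) :
    pd i (fun y ↦ f y - g y) x = pd i f x - pd i g x := by
  simp [pd, fderiv_fun_sub hf hg]

theorem pd_mul (hf : DifferentiableAt ℝ f x) (hg : DifferentiableAt ℝ g x) :
    pd i (fun y ↦ f y * g y) x = f x * pd i g x + pd i f x * g x := by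
  simp [pd, fderiv_fun_mul hf hg, mul_comm]

theorem pd_sum {ι : Type*} (s : Finset ι) {f : ι → E3 → ℝ}
    (hf : ∀ j ∈ s, DifferentiableAt ℝ (f j) x) :
    pd i (fun y ↦ ∑ j ∈ s, f j y) x = ∑ j ∈ s, pd i (f j) x := by
  simp [pd, fderiv_fun_sum hf]

theorem pd_const (c : ℝ) : pd i (fun _ ↦ c) x = 0 := by simp [pd]

theorem pd_coord (j : Fin 3) : pd i (fun y ↦ y j) x = if i = j then 1 else 0 := by
  have hderiv : HasFDerivAt (fun y : E3 ↦ y j) (EuclideanSpace.proj j : E3 →L[ℝ] ℝ) x :=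
    (EuclideanSpace.proj j : E3 →L[ℝ] ℝ).hasFDerivAt
  rw [pd, hderiv.fderiv]
  simp [eq_comm]

theorem pd_norm_sq : pd i (fun y ↦ ‖y‖ ^ 2) x = 2 * x i := by
  rw [pd, (hasStrictFDerivAt_norm_sq x).hasFDerivAt.fderiv]
  simp [EuclideanSpace.inner_single_right]

theorem IsSchwartz.pd (hf : IsSchwartz f) : IsSchwartz (pd i f) := hf.fderiv_apply _

theorem integral_mul_pd (hf : IsSchwartz f) (hg : IsSchwartz g) :
    ∫ x, f x * pd i g x = -∫ x, pd i f x * g x :=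
  hf.integral_mul_fderiv hg _

end PartialDerivatives

@[fun_prop]
theorem hasTemperateGrowth_coord (i : Fin 3) : (fun x : E3 ↦ x i).HasTemperateGrowth :=
  (EuclideanSpace.proj i : E3 →L[ℝ] ℝ).hasTemperateGrowth

@[fun_prop]
theorem hasTemperateGrowth_div_const {E : Type*} [NormedAddCommGroup E] [NormedSpace ℝ E]
    {f : E → ℝ} (hf : f.HasTemperateGrowth) (c : ℝ) : (fun x ↦ f x / c).HasTemperateGrowth :=
  hf.mul (.const c⁻¹)

section Weight

theorem jap_pos (x : E3) : 0 < jap x := Real.sqrt_pos.mpr (by positivity)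

theorem jap_rpow (s : ℝ) (x : E3) : jap x ^ s = (1 + ‖x‖ ^ 2) ^ (s / 2) := by
  rw [jap, Real.sqrt_eq_rpow, ← Real.rpow_mul (by positivity)]
  ring_nf

@[fun_prop]
theorem hasTemperateGrowth_jap_rpow (s : ℝ) : (fun x ↦ jap x ^ s).HasTemperateGrowth := by
  simp only [jap_rpow]
  fun_prop

theorem pd_jap_rpow (s : ℝ) (i : Fin 3) (x : E3) :
    pd i (fun y ↦ jap y ^ s) x = s * jap x ^ s * (x i / (1 + ‖x‖ ^ 2)) := by
  have hpos : 0 < 1 + ‖x‖ ^ 2 := by positivity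
  have hderiv := (((hasStrictFDerivAt_norm_sq x).hasFDerivAt.const_add 1).rpow_const
    (p := s / 2) (.inl hpos.ne'))
  simp only [jap_rpow, pd, hderiv.fderiv]
  simp [EuclideanSpace.inner_single_right, Real.rpow_sub_one hpos.ne']
  ring

end Weight

section Maxwellian

theorem Mx_pos (x : E3) : 0 < Mx x := by unfold Mx; positivity

theorem sqrtM_pos (x : E3) : 0 < sqrtM x := Real.sqrt_pos.mpr (Mx_pos x)

theorem sqrtM_mul_self (x : E3) : sqrtM x * sqrtM x = Mx x := Real.mul_self_sqrt (Mx_pos x).le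

theorem Mx_eq_sqrtM_mul_sqrtM : Mx = fun x ↦ sqrtM x * sqrtM x :=
  funext fun x ↦ (sqrtM_mul_self x).symm

theorem Mx_rpow_neg_half (x : E3) : Mx x ^ (-(1 : ℝ) / 2) = (sqrtM x)⁻¹ := by
  rw [sqrtM, Real.sqrt_eq_rpow, ← Real.rpow_neg (Mx_pos x).le, neg_div]

theorem sqrtM_eq_exp (x : E3) :
    sqrtM x = Real.exp (-(1 / 4) * ‖x‖ ^ 2) * Real.sqrt ((2 * π) ^ (-(3 : ℝ) / 2)) := by
  rw [sqrtM, Mx, Real.sqrt_mul (by positivity), Real.sqrt_eq_rpow (Real.exp _), ← Real.exp_mul,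
    mul_comm]
  ring_nf

theorem isSchwartz_sqrtM_mul {p : E3 → ℝ} (hp : p.HasTemperateGrowth) :
    IsSchwartz fun x ↦ sqrtM x * p x := by
  have hexp : (fun x ↦ sqrtM x * p x) = fun x ↦ Real.exp (-(1 / 4) * ‖x‖ ^ 2) •
      (Real.sqrt ((2 * π) ^ (-(3 : ℝ) / 2)) * p x) :=
    funext fun x ↦ by rw [sqrtM_eq_exp, mul_assoc, smul_eq_mul]
  rw [hexp]
  exact isSchwartz_exp_neg_mul_norm_sq_smul (by norm_num) (.mul (.const _) hp)

theorem isSchwartz_sqrtM : IsSchwartz sqrtM := by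
  simpa only [mul_one] using isSchwartz_sqrtM_mul (.const 1)

theorem isSchwartz_Mx : IsSchwartz Mx := by
  rw [Mx_eq_sqrtM_mul_sqrtM]
  exact isSchwartz_sqrtM.mul isSchwartz_sqrtM

theorem pd_sqrtM (i : Fin 3) (x : E3) : pd i sqrtM x = -(x i / 2) * sqrtM x := by
  have hderiv := (((hasStrictFDerivAt_norm_sq x).hasFDerivAt.const_mul (-(1 / 4))).exp).mul_const
    (Real.sqrt ((2 * π) ^ (-(3 : ℝ) / 2)))
  rw [pd, funext sqrtM_eq_exp, hderiv.fderiv]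
  simp [EuclideanSpace.inner_single_right]
  ring

theorem pd_Mx (i : Fin 3) (x : E3) : pd i Mx x = -x i * Mx x := by
  rw [Mx_eq_sqrtM_mul_sqrtM, pd_mul i isSchwartz_sqrtM.differentiable.differentiableAt
    isSchwartz_sqrtM.differentiable.differentiableAt, pd_sqrtM]
  ring

/-- The twisted derivative `√M ∂ᵢ(u / √M) = ∂ᵢu + (ξᵢ/2) u`, in terms of which the linearized
operator takes a divergence form. -/
noncomputable def maxwellDeriv (i : Fin 3) (u : E3 → ℝ) (x : E3) : ℝ := pd i u x + x i / 2 * u x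

variable {u v : E3 → ℝ} (i : Fin 3)

theorem IsSchwartz.maxwellDeriv (hu : IsSchwartz u) : IsSchwartz (maxwellDeriv i u) :=
  (hu.pd i).add (hu.mul_left (by fun_prop))

theorem maxwellDeriv_sub (hu : Differentiable ℝ u) (hv : Differentiable ℝ v) (x : E3) :
    maxwellDeriv i (fun y ↦ u y - v y) x = maxwellDeriv i u x - maxwellDeriv i v x := by
  rw [maxwellDeriv, pd_sub i (hu x) (hv x)]
  simp only [maxwellDeriv]
  ring

theorem maxwellDeriv_mul_sqrtM {p : E3 → ℝ} (hp : Differentiable ℝ p) (x : E3) :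
    maxwellDeriv i (fun y ↦ p y * sqrtM y) x = pd i p x * sqrtM x := by
  rw [maxwellDeriv, pd_mul i (hp x) (isSchwartz_sqrtM.differentiable x), pd_sqrtM]
  ring

theorem pd_sqrtM_mul (hu : Differentiable ℝ u) (x : E3) :
    pd i (fun y ↦ sqrtM y * u y) x = sqrtM x * (maxwellDeriv i u x - x i * u x) := by
  rw [pd_mul i (isSchwartz_sqrtM.differentiable x) (hu x), pd_sqrtM, maxwellDeriv]
  ring

theorem integral_maxwellDeriv_mul (hu : IsSchwartz u) (hv : IsSchwartz v) :
    ∫ x, maxwellDeriv i u x * v x = ∫ x, u x * (x i / 2 * v x - pd i v x) := by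
  have hcoord : IsSchwartz fun x ↦ x i / 2 * v x := hv.mul_left (by fun_prop)
  calc ∫ x, maxwellDeriv i u x * v x
      = ∫ x, (pd i u x * v x + u x * (x i / 2 * v x)) := by
        simp only [maxwellDeriv]; congr! 2; ring
    _ = ∫ x, (u x * (x i / 2 * v x) - u x * pd i v x) := by
        rw [integral_add ((hu.pd i).mul hv).integrable (hu.mul hcoord).integrable,
          integral_sub (hu.mul hcoord).integrable (hu.mul (hv.pd i)).integrable,
          integral_mul_pd i hu hv]
        ring
    _ = ∫ x, u x * (x i / 2 * v x - pd i v x) := by simp only [mul_sub]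

end Maxwellian

section NormPower

variable {E : Type*} [NormedAddCommGroup E] [NormedSpace ℝ E] [FiniteDimensional ℝ E]
  [MeasurableSpace E] [BorelSpace E] {μ : Measure E} [μ.IsAddHaarMeasure] {s : ℝ}

theorem integrableOn_ball_norm_rpow (hE : 1 ≤ Module.finrank ℝ E)
    (hs : -(Module.finrank ℝ E : ℝ) < s) :
    IntegrableOn (fun z : E ↦ ‖z‖ ^ s) (Metric.ball 0 1) μ :=
  integrableOn_ball_of_norm_le_rpow (C := 1) hE (neg_lt.mp hs)
    (.of_forall fun z ↦ by
      rw [neg_neg, one_mul, Real.norm_of_nonneg (Real.rpow_nonneg (norm_nonneg z) s)])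
    (Measurable.aestronglyMeasurable (by fun_prop))

theorem isTemperedKernel_norm_rpow (hE : 1 ≤ Module.finrank ℝ E)
    (hs : -(Module.finrank ℝ E : ℝ) < s) : IsTemperedKernel (fun z : E ↦ ‖z‖ ^ s) μ := by
  set N := ⌈|s|⌉₊
  refine ⟨N + μ.integrablePower, Integrable.mono'
    (((integrableOn_ball_norm_rpow hE hs).integrable_indicator measurableSet_ball).add
      (Measure.integrable_pow_neg_integrablePower μ))
    (Measurable.aestronglyMeasurable (by fun_prop)) (.of_forall fun z ↦ ?_)⟩
  have hnorm := norm_nonneg z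
  rw [Real.norm_of_nonneg (by positivity)]
  by_cases hz : z ∈ Metric.ball 0 1
  · simp only [Pi.add_apply, Set.indicator_of_mem hz]
    refine (div_le_self (by positivity) (one_le_pow₀ (by linarith))).trans ?_
    exact le_add_of_nonneg_right (by positivity)
  · simp only [Pi.add_apply, Set.indicator_of_notMem hz, zero_add]
    have hz1 : 1 ≤ ‖z‖ := by simpa using hz
    have hpow : ‖z‖ ^ s ≤ (1 + ‖z‖) ^ N := calc
      ‖z‖ ^ s ≤ ‖z‖ ^ (N : ℝ) :=
        Real.rpow_le_rpow_of_exponent_le hz1 ((le_abs_self s).trans (Nat.le_ceil _))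
      _ = ‖z‖ ^ N := Real.rpow_natCast _ _
      _ ≤ (1 + ‖z‖) ^ N := by gcongr; linarith
    rw [Real.rpow_neg (by positivity), Real.rpow_natCast, pow_add, div_le_iff₀ (by positivity)]
    calc ‖z‖ ^ s ≤ (1 + ‖z‖) ^ N := hpow
      _ = ((1 + ‖z‖) ^ μ.integrablePower)⁻¹ * ((1 + ‖z‖) ^ N * (1 + ‖z‖) ^ μ.integrablePower) := by
        field_simp

end NormPower

section Kernel

variable {γ : ℝ} (i j : Fin 3)

theorem Bij_neg (γ : ℝ) (z : E3) : Bij γ i j (-z) = Bij γ i j z := by simp [Bij]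

theorem Bij_comm (γ : ℝ) (z : E3) : Bij γ i j z = Bij γ j i z := by
  simp only [Bij, eq_comm, mul_comm (z i)]

theorem abs_Bij_le (γ : ℝ) (z : E3) : |Bij γ i j z| ≤ 2 * ‖z‖ ^ (γ + 2) := by
  rw [Bij, abs_mul, abs_of_nonneg (Real.rpow_nonneg (norm_nonneg z) _)]
  gcongr
  have hcoord : |z i * z j / ‖z‖ ^ 2| ≤ 1 := by
    rw [abs_div, abs_mul, abs_of_nonneg (sq_nonneg ‖z‖)]
    refine div_le_one_of_le₀ ?_ (sq_nonneg _)
    rw [sq]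
    exact mul_le_mul (PiLp.norm_apply_le z i) (PiLp.norm_apply_le z j) (abs_nonneg _)
      (norm_nonneg z)
  have hdelta : |if i = j then (1 : ℝ) else 0| ≤ 1 := by split_ifs <;> simp
  linarith [abs_sub (if i = j then (1 : ℝ) else 0) (z i * z j / ‖z‖ ^ 2)]

theorem isTemperedKernel_Bij (hγ : -5 < γ) : IsTemperedKernel (Bij γ i j) volume := by
  refine (isTemperedKernel_norm_rpow (s := γ + 2) (by simp) (by simp; linarith)).of_abs_le
    (Measurable.aestronglyMeasurable ?_) (abs_Bij_le i j γ)
  unfold Bij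
  fun_prop

theorem Bij_convolution_apply (γ : ℝ) (f : E3 → ℝ) (x : E3) :
    (Bij γ i j ⋆[lsmul ℝ ℝ, volume] f) x = ∫ y, Bij γ i j (x - y) * f y := by
  simp only [convolution_eq_swap, ContinuousLinearMap.lsmul_apply, smul_eq_mul]

theorem integrable_Bij_mul (hγ : -5 < γ) {f : E3 → ℝ} (hf : IsSchwartz f) (x : E3) :
    Integrable fun y ↦ Bij γ i j (x - y) * f y := by
  simpa only [smul_eq_mul, sub_sub_cancel] using
    ((isTemperedKernel_Bij i j hγ).integrable_smul_comp_sub hf x).comp_sub_left x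

theorem sum_Bij_mul_coord (γ : ℝ) (z : E3) : ∑ j, Bij γ i j z * z j = 0 := by
  rcases eq_or_ne z 0 with rfl | hz
  · simp
  · have hnorm : ‖z‖ ^ 2 ≠ 0 := by positivity
    have hsum : ∑ j, z i * z j / ‖z‖ ^ 2 * z j = z i := by
      simp only [div_mul_eq_mul_div, mul_assoc, ← sq, ← Finset.sum_div, ← Finset.mul_sum]
      rw [← EuclideanSpace.real_norm_sq_eq, mul_div_cancel_right₀ _ hnorm]
    have hterm : ∀ j, Bij γ i j z * z j =
        ((if i = j then z j else 0) - z i * z j / ‖z‖ ^ 2 * z j) * ‖z‖ ^ (γ + 2) := fun j ↦ by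
      rw [Bij]
      split_ifs <;> ring
    simp only [hterm]
    rw [← Finset.sum_mul, Finset.sum_sub_distrib, hsum]
    simp

end Kernel

section QuadraticForm

/-- The squared area `|z ∧ w|² = |z|²|w|² - (z·w)²` of the parallelogram spanned by `z` and `w`. -/
noncomputable def wedgeSq (z : E3) (w : Fin 3 → ℝ) : ℝ :=
  ‖z‖ ^ 2 * ∑ i, w i ^ 2 - (∑ i, z i * w i) ^ 2

theorem wedgeSq_eq_sum (z : E3) (w : Fin 3 → ℝ) :
    wedgeSq z w = 1 / 2 * ∑ a, ∑ b, (z a * w b - z b * w a) ^ 2 := by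
  simp only [wedgeSq, EuclideanSpace.real_norm_sq_eq, Fin.sum_univ_three]
  ring

theorem wedgeSq_nonneg (z : E3) (w : Fin 3 → ℝ) : 0 ≤ wedgeSq z w := by
  rw [wedgeSq_eq_sum]
  positivity

theorem wedgeSq_le (z : E3) (w : Fin 3 → ℝ) : wedgeSq z w ≤ ‖z‖ ^ 2 * ∑ i, w i ^ 2 :=
  sub_le_self _ (sq_nonneg _)

/-- The bilinear form `∑ᵢⱼ Bⁱʲ(z) vᵢ wⱼ` of the Landau kernel. -/
noncomputable def landauForm (γ : ℝ) (z : E3) (v w : Fin 3 → ℝ) : ℝ :=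
  ∑ i, ∑ j, Bij γ i j z * v i * w j

theorem landauForm_comm (γ : ℝ) (z : E3) (v w : Fin 3 → ℝ) :
    landauForm γ z v w = landauForm γ z w v := by
  rw [landauForm, Finset.sum_comm]
  simp only [landauForm, Bij_comm _ _ γ z, mul_right_comm]

theorem landauForm_self {γ : ℝ} {z : E3} (hz : z ≠ 0) (w : Fin 3 → ℝ) :
    landauForm γ z w w = ‖z‖ ^ γ * wedgeSq z w := by
  have hnorm : 0 < ‖z‖ := norm_pos_iff.mpr hz
  have hinv : (‖z‖ ^ 2)⁻¹ * ‖z‖ ^ 2 = 1 := inv_mul_cancel₀ (by positivity)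
  rw [landauForm, wedgeSq]
  simp only [Bij, Real.rpow_add hnorm γ 2, Real.rpow_two, Fin.sum_univ_three, div_eq_mul_inv]
  simp
  linear_combination (-‖z‖ ^ γ * (z 0 * w 0 + z 1 * w 1 + z 2 * w 2) ^ 2) * hinv

theorem landauForm_zero_self (γ : ℝ) (w : Fin 3 → ℝ) :
    landauForm γ 0 w w = 0 ^ (γ + 2) * ∑ i, w i ^ 2 := by
  simp [landauForm, Bij, Finset.mul_sum, sq, mul_assoc]

theorem landauForm_self_nonneg (γ : ℝ) (z : E3) (w : Fin 3 → ℝ) : 0 ≤ landauForm γ z w w := by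
  rcases eq_or_ne z 0 with rfl | hz
  · rw [landauForm_zero_self]
    positivity
  · rw [landauForm_self hz]
    exact mul_nonneg (by positivity) (wedgeSq_nonneg z w)

end QuadraticForm

section CollisionFlux

variable {γ : ℝ} {f g : E3 → ℝ}

/-- The flux in the divergence form `Q(f, g) = ∑ᵢ ∂ᵢ (collisionFlux γ i f g)` of the collision
operator. -/
noncomputable def collisionFlux (γ : ℝ) (i : Fin 3) (f g : E3 → ℝ) (x : E3) : ℝ :=
  ∑ j, ∫ y, Bij γ i j (x - y) * (f y * pd j g x - pd j f y * g x)

theorem hasTemperateGrowth_Bij_convolution (hγ : -5 < γ) (i j : Fin 3) (hf : IsSchwartz f) :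
    (Bij γ i j ⋆[lsmul ℝ ℝ, volume] f).HasTemperateGrowth :=
  (isTemperedKernel_Bij i j hγ).hasTemperateGrowth_convolution hf

theorem integral_Bij_mul_sub (hγ : -5 < γ) (i j : Fin 3) (hf : IsSchwartz f)
    (hg : IsSchwartz g) (a b : ℝ) (x : E3) :
    ∫ y, Bij γ i j (x - y) * (f y * a - g y * b) =
      (Bij γ i j ⋆[lsmul ℝ ℝ, volume] f) x * a - (Bij γ i j ⋆[lsmul ℝ ℝ, volume] g) x * b := by
  simp only [Bij_convolution_apply, mul_sub, ← mul_assoc]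
  rw [integral_sub ((integrable_Bij_mul i j hγ hf x).mul_const a)
    ((integrable_Bij_mul i j hγ hg x).mul_const b), integral_mul_const, integral_mul_const]

theorem differentiable_integral_Bij_mul (hγ : -5 < γ) (i j : Fin 3) (hf : IsSchwartz f)
    (hg : IsSchwartz g) :
    Differentiable ℝ fun x ↦ ∫ y, Bij γ i j (x - y) * (f y * pd j g x - pd j f y * g x) := by
  simp only [integral_Bij_mul_sub hγ i j hf (hf.pd j)]
  exact (((hasTemperateGrowth_Bij_convolution hγ i j hf).mul (hg.pd j).hasTemperateGrowth).sub
    ((hasTemperateGrowth_Bij_convolution hγ i j (hf.pd j)).mul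
      hg.hasTemperateGrowth)).1.differentiable (by simp)

theorem differentiable_collisionFlux (hγ : -5 < γ) (i : Fin 3) (hf : IsSchwartz f)
    (hg : IsSchwartz g) : Differentiable ℝ (collisionFlux γ i f g) :=
  Differentiable.fun_sum fun j _ ↦ differentiable_integral_Bij_mul hγ i j hf hg

theorem Qop_eq_sum_pd_collisionFlux (hγ : -5 < γ) (hf : IsSchwartz f) (hg : IsSchwartz g)
    (x : E3) : Qop γ f g x = ∑ i, pd i (collisionFlux γ i f g) x :=
  Finset.sum_congr rfl fun i _ ↦
    (pd_sum i _ fun j _ ↦ differentiable_integral_Bij_mul hγ i j hf hg x).symm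

end CollisionFlux

section LinearizedFlux

variable {γ : ℝ} {u v : E3 → ℝ}

/-- The antisymmetrized vector `√M(y) (√M ∇(u/√M))(x) - √M(x) (√M ∇(u/√M))(y)`, whose contraction
against the kernel gives the Dirichlet form of the linearized operator. -/
noncomputable def pairDiff (u : E3 → ℝ) (x y : E3) (j : Fin 3) : ℝ :=
  sqrtM y * maxwellDeriv j u x - sqrtM x * maxwellDeriv j u y

theorem pairDiff_swap (u : E3 → ℝ) (x y : E3) (j : Fin 3) :
    pairDiff u y x j = -pairDiff u x y j := by
  simp only [pairDiff]
  ring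

/-- The flux `K` in the divergence form `L u = ∑ᵢ (ξᵢ/2 - ∂ᵢ) Kᵢ` of the linearized operator. -/
noncomputable def linearizedFlux (γ : ℝ) (i : Fin 3) (u : E3 → ℝ) (x : E3) : ℝ :=
  ∑ j, ∫ y, Bij γ i j (x - y) * (sqrtM y * pairDiff u x y j)

theorem sqrtM_mul_pairDiff (u : E3 → ℝ) (x y : E3) (j : Fin 3) :
    sqrtM y * pairDiff u x y j =
      Mx y * maxwellDeriv j u x - sqrtM y * maxwellDeriv j u y * sqrtM x := by
  rw [pairDiff, ← sqrtM_mul_self]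
  ring

theorem isSchwartz_linearizedFlux (hγ : -5 < γ) (i : Fin 3) (hu : IsSchwartz u) :
    IsSchwartz (linearizedFlux γ i u) := by
  refine IsSchwartz.sum _ fun j ↦ ?_
  simp only [sqrtM_mul_pairDiff, integral_Bij_mul_sub hγ i j isSchwartz_Mx
    (isSchwartz_sqrtM.mul (hu.maxwellDeriv j))]
  exact ((hu.maxwellDeriv j).mul_left (hasTemperateGrowth_Bij_convolution hγ i j isSchwartz_Mx)).sub
    (isSchwartz_sqrtM.mul_left (hasTemperateGrowth_Bij_convolution hγ i j
      (isSchwartz_sqrtM.mul (hu.maxwellDeriv j))))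

theorem sum_integral_Bij_mul_coord_sub (hγ : -5 < γ) (i : Fin 3) {G : E3 → ℝ}
    (hG : IsSchwartz G) (x : E3) :
    ∑ j, ∫ y, Bij γ i j (x - y) * ((x j - y j) * G y) = 0 := by
  rw [← integral_finsetSum _ fun j _ ↦ integrable_Bij_mul i j hγ (hG.mul_left (by fun_prop)) x]
  have hnull : ∀ y, ∑ j, Bij γ i j (x - y) * ((x j - y j) * G y) = 0 := fun y ↦ by
    simpa only [PiLp.sub_apply, Finset.sum_mul, zero_mul, mul_assoc] using
      congrArg (· * G y) (sum_Bij_mul_coord i γ (x - y))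
  simp only [hnull, integral_zero]

theorem collisionFlux_add_collisionFlux (hγ : -5 < γ) (i : Fin 3) (hu : IsSchwartz u) (x : E3) :
    collisionFlux γ i Mx (fun y ↦ sqrtM y * u y) x +
      collisionFlux γ i (fun y ↦ sqrtM y * u y) Mx x = sqrtM x * linearizedFlux γ i u x := by
  have hMu : IsSchwartz fun y ↦ sqrtM y * u y := isSchwartz_sqrtM.mul hu
  set G : E3 → ℝ := fun y ↦ Mx y * (sqrtM x * u x) + sqrtM y * u y * Mx x with hGdef
  have hG : IsSchwartz G :=
    (isSchwartz_Mx.mul_right (.const _)).add (hMu.mul_right (.const _))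
  have hcollision : ∀ {f g : E3 → ℝ}, IsSchwartz f → IsSchwartz g → ∀ j (a b : ℝ),
      Integrable fun y ↦ Bij γ i j (x - y) * (f y * a - g y * b) := fun hf hg j a b ↦
    integrable_Bij_mul i j hγ ((hf.mul_right (.const a)).sub (hg.mul_right (.const b))) x
  have hsum : ∀ j, (∫ y, Bij γ i j (x - y) *
        (Mx y * pd j (fun y ↦ sqrtM y * u y) x - pd j Mx y * (sqrtM x * u x))) +
      ∫ y, Bij γ i j (x - y) *
        (sqrtM y * u y * pd j Mx x - pd j (fun y ↦ sqrtM y * u y) y * Mx x) =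
      sqrtM x * (∫ y, Bij γ i j (x - y) * (sqrtM y * pairDiff u x y j)) -
        ∫ y, Bij γ i j (x - y) * ((x j - y j) * G y) := fun j ↦ by
    have hpair := hcollision isSchwartz_Mx (isSchwartz_sqrtM.mul (hu.maxwellDeriv j)) j
      (maxwellDeriv j u x) (sqrtM x)
    simp only [← sqrtM_mul_pairDiff] at hpair
    rw [← integral_add (hcollision isSchwartz_Mx (isSchwartz_Mx.pd j) j _ _)
      (hcollision hMu (hMu.pd j) j _ _), ← integral_const_mul, ← integral_sub
      (hpair.const_mul _) (integrable_Bij_mul i j hγ (hG.mul_left (by fun_prop)) x)]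
    congr! 2 with y
    simp only [pd_sqrtM_mul j hu.differentiable, pd_Mx, pairDiff, hGdef, ← sqrtM_mul_self]
    ring
  rw [collisionFlux, collisionFlux, ← Finset.sum_add_distrib, Finset.sum_congr rfl fun j _ ↦ hsum j,
    Finset.sum_sub_distrib, sum_integral_Bij_mul_coord_sub hγ i hG, sub_zero, ← Finset.mul_sum,
    linearizedFlux]

theorem Lop_eq_sum (hγ : -5 < γ) (hu : IsSchwartz u) (x : E3) :
    Lop γ u x = ∑ i, (x i / 2 * linearizedFlux γ i u x - pd i (linearizedFlux γ i u) x) := by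
  have hMu : IsSchwartz fun y ↦ sqrtM y * u y := isSchwartz_sqrtM.mul hu
  have hpd : ∀ i, pd i (collisionFlux γ i Mx fun y ↦ sqrtM y * u y) x +
      pd i (collisionFlux γ i (fun y ↦ sqrtM y * u y) Mx) x =
      -sqrtM x * (x i / 2 * linearizedFlux γ i u x - pd i (linearizedFlux γ i u) x) := fun i ↦ by
    rw [← pd_add i (differentiable_collisionFlux hγ i isSchwartz_Mx hMu x)
      (differentiable_collisionFlux hγ i hMu isSchwartz_Mx x)]
    simp only [collisionFlux_add_collisionFlux hγ i hu]
    rw [pd_sqrtM_mul i (isSchwartz_linearizedFlux hγ i hu).differentiable, maxwellDeriv]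
    ring
  rw [Lop, Qop_eq_sum_pd_collisionFlux hγ isSchwartz_Mx hMu,
    Qop_eq_sum_pd_collisionFlux hγ hMu isSchwartz_Mx, ← Finset.sum_add_distrib,
    Finset.sum_congr rfl fun i _ ↦ hpd i, ← Finset.mul_sum, Mx_rpow_neg_half]
  field_simp [(sqrtM_pos x).ne']

end LinearizedFlux

section DirichletForm

variable {γ : ℝ} {u v : E3 → ℝ}

/-- The symmetric form `½ ∬ Bⁱʲ(x - y) wᵢ(u) wⱼ(v)`, `w = pairDiff`, represented by the linearized
operator. -/
noncomputable def landauDirichlet (γ : ℝ) (u v : E3 → ℝ) : ℝ :=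
  1 / 2 * ∫ p : E3 × E3,
    landauForm γ (p.1 - p.2) (pairDiff u p.1 p.2) (pairDiff v p.1 p.2)

theorem landauDirichlet_comm (γ : ℝ) (u v : E3 → ℝ) :
    landauDirichlet γ u v = landauDirichlet γ v u := by
  simp only [landauDirichlet, landauForm_comm γ _ (pairDiff u _ _)]

theorem landauDirichlet_self_nonneg (γ : ℝ) (u : E3 → ℝ) : 0 ≤ landauDirichlet γ u u :=
  mul_nonneg (by norm_num) (integral_nonneg fun _ ↦ landauForm_self_nonneg γ _ _)

theorem integrable_Bij_mul_pairDiff (hγ : -5 < γ) (i j : Fin 3) (hu : IsSchwartz u)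
    (hv : IsSchwartz v) : Integrable fun p : E3 × E3 ↦
      Bij γ i j (p.1 - p.2) * (sqrtM p.2 * v p.1) * pairDiff u p.1 p.2 j := by
  have hk := isTemperedKernel_Bij i j hγ
  refine ((hk.integrable_prod ((hu.maxwellDeriv j).mul hv) isSchwartz_Mx).sub
    (hk.integrable_prod (isSchwartz_sqrtM.mul hv)
      (isSchwartz_sqrtM.mul (hu.maxwellDeriv j)))).congr (.of_forall fun p ↦ ?_)
  simp only [pairDiff, ← sqrtM_mul_self, Pi.sub_apply]
  ring

/-- The integrand of `⟨L u, v⟩` before antisymmetrization in the two velocities. -/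
noncomputable def halfPairing (γ : ℝ) (u v : E3 → ℝ) (p : E3 × E3) : ℝ :=
  landauForm γ (p.1 - p.2) (fun i ↦ sqrtM p.2 * maxwellDeriv i v p.1) (pairDiff u p.1 p.2)

theorem halfPairing_add_swap (γ : ℝ) (u v : E3 → ℝ) (p : E3 × E3) :
    halfPairing γ u v p + halfPairing γ u v p.swap =
      landauForm γ (p.1 - p.2) (pairDiff u p.1 p.2) (pairDiff v p.1 p.2) := by
  rw [landauForm_comm]
  simp only [halfPairing, landauForm, ← Finset.sum_add_distrib, Prod.fst_swap, Prod.snd_swap]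
  refine Finset.sum_congr rfl fun i _ ↦ Finset.sum_congr rfl fun j _ ↦ ?_
  rw [← neg_sub p.1, Bij_neg, pairDiff_swap]
  simp only [pairDiff]
  ring

theorem integrable_halfPairing (hγ : -5 < γ) (hu : IsSchwartz u) (hv : IsSchwartz v) :
    Integrable (halfPairing γ u v) := by
  exact integrable_finsetSum Finset.univ fun i _ ↦ integrable_finsetSum Finset.univ fun j _ ↦
    integrable_Bij_mul_pairDiff hγ i j hu (hv.maxwellDeriv i)

theorem integrable_landauForm_pairDiff (hγ : -5 < γ) (hu : IsSchwartz u) (hv : IsSchwartz v) :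
    Integrable fun p : E3 × E3 ↦
      landauForm γ (p.1 - p.2) (pairDiff u p.1 p.2) (pairDiff v p.1 p.2) := by
  simp only [← halfPairing_add_swap]
  exact (integrable_halfPairing hγ hu hv).add (integrable_halfPairing hγ hu hv).swap

theorem integral_halfPairing (hγ : -5 < γ) (hu : IsSchwartz u) (hv : IsSchwartz v) :
    ∫ p, halfPairing γ u v p = landauDirichlet γ u v := by
  have hint := integrable_halfPairing hγ hu hv
  have hintSwap : Integrable fun p : E3 × E3 ↦ halfPairing γ u v p.swap := hint.swap
  have hswap : ∫ p : E3 × E3, halfPairing γ u v p.swap = ∫ p, halfPairing γ u v p :=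
    integral_prod_swap (halfPairing γ u v)
  simp only [landauDirichlet, ← halfPairing_add_swap]
  rw [integral_add hint hintSwap, hswap]
  ring

theorem integral_halfPairing_eq_sum (hγ : -5 < γ) (hu : IsSchwartz u) (hv : IsSchwartz v) :
    ∫ p, halfPairing γ u v p = ∑ i, ∫ x, maxwellDeriv i v x * linearizedFlux γ i u x := by
  have hterm := fun i j ↦ integrable_Bij_mul_pairDiff hγ i j hu (hv.maxwellDeriv i)
  have hinner : ∀ i j x, ∫ y, Bij γ i j (x - y) * (sqrtM y * maxwellDeriv i v x) *
      pairDiff u x y j =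
        maxwellDeriv i v x * ∫ y, Bij γ i j (x - y) * (sqrtM y * pairDiff u x y j) :=
    fun i j x ↦ by
      rw [← integral_const_mul]
      congr! 2
      ring
  calc ∫ p, halfPairing γ u v p
      = ∑ i, ∑ j, ∫ p : E3 × E3, Bij γ i j (p.1 - p.2) *
          (sqrtM p.2 * maxwellDeriv i v p.1) * pairDiff u p.1 p.2 j := by
        simp only [halfPairing, landauForm]
        rw [integral_finsetSum _ fun i _ ↦ integrable_finsetSum _ fun j _ ↦ hterm i j]
        exact Finset.sum_congr rfl fun i _ ↦ integral_finsetSum _ fun j _ ↦ hterm i j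
    _ = ∑ i, ∫ x, maxwellDeriv i v x * linearizedFlux γ i u x := by
        refine Finset.sum_congr rfl fun i _ ↦ ?_
        simp only [linearizedFlux, Finset.mul_sum, ← hinner]
        rw [integral_finsetSum _ fun j _ ↦ (hterm i j).integral_prod_left]
        exact Finset.sum_congr rfl fun j _ ↦ integral_prod _ (hterm i j)

theorem ipv_Lop (hγ : -5 < γ) (hu : IsSchwartz u) (hv : IsSchwartz v) :
    ipv (Lop γ u) v = landauDirichlet γ u v := by
  have hK := fun i ↦ isSchwartz_linearizedFlux hγ i hu
  have hint : ∀ i, Integrable fun x ↦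
      v x * (x i / 2 * linearizedFlux γ i u x - pd i (linearizedFlux γ i u) x) := fun i ↦
    (hv.mul (((hK i).mul_left (by fun_prop)).sub ((hK i).pd i))).integrable
  calc ipv (Lop γ u) v
      = ∫ x, ∑ i, v x * (x i / 2 * linearizedFlux γ i u x - pd i (linearizedFlux γ i u) x) := by
        simp only [ipv, Lop_eq_sum hγ hu, ← Finset.mul_sum, mul_comm]
    _ = ∑ i, ∫ x, maxwellDeriv i v x * linearizedFlux γ i u x := by
        rw [integral_finsetSum _ fun i _ ↦ hint i]
        exact Finset.sum_congr rfl fun i _ ↦ (integral_maxwellDeriv_mul i hv (hK i)).symm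
    _ = landauDirichlet γ u v := by
        rw [← integral_halfPairing_eq_sum hγ hu hv, integral_halfPairing hγ hu hv]

end DirichletForm

section Macroscopic

variable {γ : ℝ} {u : E3 → ℝ} (a : ℝ) (b : Fin 3 → ℝ) (c : ℝ)

/-- The hydrodynamic function `(a + b·ξ + c|ξ|²) √M`. -/
noncomputable def hydrodynamic (x : E3) : ℝ :=
  (a + (∑ i, b i * x i) + c * ‖x‖ ^ 2) * sqrtM x

theorem hasTemperateGrowth_hydrodynamic_poly :
    (fun x : E3 ↦ a + (∑ i, b i * x i) + c * ‖x‖ ^ 2).HasTemperateGrowth := by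
  fun_prop

theorem isSchwartz_hydrodynamic : IsSchwartz (hydrodynamic a b c) :=
  isSchwartz_sqrtM.mul_left (hasTemperateGrowth_hydrodynamic_poly a b c)

theorem maxwellDeriv_hydrodynamic (j : Fin 3) (x : E3) :
    maxwellDeriv j (hydrodynamic a b c) x = (b j + 2 * c * x j) * sqrtM x := by
  have hdiff : ∀ i, Differentiable ℝ fun x : E3 ↦ b i * x i := fun i ↦ by fun_prop
  have hnorm : Differentiable ℝ fun x : E3 ↦ ‖x‖ ^ 2 := differentiable_id.norm_sq ℝ
  have hlin : ∀ i, pd j (fun x : E3 ↦ b i * x i) x = b i * if j = i then 1 else 0 := fun i ↦ by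
    rw [pd_mul j (by fun_prop) (by fun_prop), pd_const, pd_coord, zero_mul, add_zero]
  have hquad : pd j (fun x : E3 ↦ c * ‖x‖ ^ 2) x = 2 * c * x j := by
    rw [pd_mul j (by fun_prop) (hnorm x), pd_const, pd_norm_sq]
    ring
  unfold hydrodynamic
  rw [maxwellDeriv_mul_sqrtM j (by fun_prop), pd_add j (by fun_prop) (hnorm.const_mul c x), hquad,
    pd_add j (by fun_prop) (by fun_prop), pd_const, pd_sum j _ fun i _ ↦ hdiff i x]
  simp [hlin]

theorem pairDiff_hydrodynamic (x y : E3) (j : Fin 3) :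
    pairDiff (hydrodynamic a b c) x y j = 2 * c * sqrtM x * sqrtM y * (x - y) j := by
  simp only [pairDiff, maxwellDeriv_hydrodynamic, PiLp.sub_apply]
  ring

theorem linearizedFlux_hydrodynamic (hγ : -5 < γ) (i : Fin 3) (x : E3) :
    linearizedFlux γ i (hydrodynamic a b c) x = 0 := by
  rw [← sum_integral_Bij_mul_coord_sub hγ i (isSchwartz_Mx.const_mul (2 * c * sqrtM x)) x,
    linearizedFlux]
  simp only [pairDiff_hydrodynamic, ← sqrtM_mul_self, PiLp.sub_apply]
  congr! 4
  ring

theorem Lop_hydrodynamic (hγ : -5 < γ) (x : E3) : Lop γ (hydrodynamic a b c) x = 0 := by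
  simp [Lop_eq_sum hγ (isSchwartz_hydrodynamic a b c),
    funext (linearizedFlux_hydrodynamic a b c hγ _), pd_const]

theorem landauForm_coord_right (γ : ℝ) (z : E3) (v : Fin 3 → ℝ) :
    landauForm γ z v z = 0 := by
  simp only [landauForm, mul_right_comm _ (v _), ← Finset.sum_mul, sum_Bij_mul_coord, zero_mul,
    Finset.sum_const_zero]

theorem landauForm_sub_coord (γ : ℝ) (z : E3) (w : Fin 3 → ℝ) (r : ℝ) :
    landauForm γ z (fun i ↦ w i - r * z i) (fun i ↦ w i - r * z i) = landauForm γ z w w := by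
  have hexpand : landauForm γ z (fun i ↦ w i - r * z i) (fun i ↦ w i - r * z i) =
      landauForm γ z w w - r * landauForm γ z w z - r * landauForm γ z z w +
        r ^ 2 * landauForm γ z z z := by
    simp only [landauForm, Finset.mul_sum, ← Finset.sum_sub_distrib, ← Finset.sum_add_distrib]
    refine Finset.sum_congr rfl fun i _ ↦ Finset.sum_congr rfl fun j _ ↦ ?_
    ring
  rw [hexpand, landauForm_comm γ z z w]
  simp only [landauForm_coord_right]
  ring

theorem landauDirichlet_sub_hydrodynamic (γ : ℝ) (hu : Differentiable ℝ u) :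
    landauDirichlet γ (fun x ↦ u x - hydrodynamic a b c x) (fun x ↦ u x - hydrodynamic a b c x) =
      landauDirichlet γ u u := by
  have hsub : ∀ x y, pairDiff (fun x ↦ u x - hydrodynamic a b c x) x y =
      fun i ↦ pairDiff u x y i - 2 * c * sqrtM x * sqrtM y * (x - y) i := by
    intro x y
    ext i
    rw [← pairDiff_hydrodynamic a b]
    simp only [pairDiff,
      maxwellDeriv_sub i hu (isSchwartz_hydrodynamic a b c).differentiable]
    ring
  simp only [landauDirichlet, hsub, landauForm_sub_coord]

end Macroscopic

section SymmetricTensor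

variable {α : Type*} [MeasurableSpace α] {μ : Measure α} {a b c d : α → ℝ}

/-- The symmetric tensor product `a ⊙ b : (x, y) ↦ a(x) b(y) + b(x) a(y)`. -/
def symmTensor (a b : α → ℝ) (p : α × α) : ℝ := a p.1 * b p.2 + b p.1 * a p.2

theorem memLp_mul_prod (ha : MemLp a 2 μ) (hb : MemLp b 2 μ) :
    MemLp (fun p : α × α ↦ a p.1 * b p.2) 2 (μ.prod μ) := by
  rw [memLp_two_iff_integrable_sq (by exact ha.1.comp_fst.mul hb.1.comp_snd)]
  simpa only [mul_pow] using ha.integrable_sq.mul_prod hb.integrable_sq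

theorem memLp_symmTensor (ha : MemLp a 2 μ) (hb : MemLp b 2 μ) :
    MemLp (symmTensor a b) 2 (μ.prod μ) :=
  (memLp_mul_prod ha hb).add (memLp_mul_prod hb ha)

variable [SFinite μ]

theorem integral_symmTensor_mul (ha : MemLp a 2 μ) (hb : MemLp b 2 μ) (hc : MemLp c 2 μ)
    (hd : MemLp d 2 μ) :
    ∫ p, symmTensor a b p * symmTensor c d p ∂μ.prod μ =
      2 * ((∫ x, a x * c x ∂μ) * (∫ x, b x * d x ∂μ) +
        (∫ x, a x * d x ∂μ) * ∫ x, b x * c x ∂μ) := by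
  have hac_bd := (ha.integrable_mul hc).mul_prod (hb.integrable_mul hd)
  have had_bc := (ha.integrable_mul hd).mul_prod (hb.integrable_mul hc)
  have hbc_ad := (hb.integrable_mul hc).mul_prod (ha.integrable_mul hd)
  have hbd_ac := (hb.integrable_mul hd).mul_prod (ha.integrable_mul hc)
  calc ∫ p, symmTensor a b p * symmTensor c d p ∂μ.prod μ
      = ∫ p, ((a * c) p.1 * (b * d) p.2 + (a * d) p.1 * (b * c) p.2) +
          ((b * c) p.1 * (a * d) p.2 + (b * d) p.1 * (a * c) p.2) ∂μ.prod μ := by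
        congr! 2
        simp only [symmTensor, Pi.mul_apply]
        ring
    _ = _ := by
        rw [integral_add (by exact hac_bd.add had_bc) (by exact hbc_ad.add hbd_ac),
          integral_add hac_bd had_bc, integral_add hbc_ad hbd_ac, integral_prod_mul (a * c) (b * d),
          integral_prod_mul (a * d) (b * c), integral_prod_mul (b * c) (a * d),
          integral_prod_mul (b * d) (a * c)]
        simp only [Pi.mul_apply]
        ring

end SymmetricTensor

section Rigidity

variable {α : Type*} [MeasurableSpace α] {μ : Measure α}

theorem integral_sq_sub_add {A B C : α → ℝ} (hA : MemLp A 2 μ) (hB : MemLp B 2 μ)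
    (hC : MemLp C 2 μ) :
    ∫ x, (A x - B x + C x) ^ 2 ∂μ =
      ∫ x, A x * A x ∂μ + ∫ x, B x * B x ∂μ + ∫ x, C x * C x ∂μ +
        2 * (∫ x, A x * C x ∂μ - ∫ x, A x * B x ∂μ - ∫ x, B x * C x ∂μ) := by
  have hint {f g : α → ℝ} (hf : MemLp f 2 μ) (hg : MemLp g 2 μ) :
      Integrable (fun x ↦ f x * g x) μ := hf.integrable_mul hg
  have hsquares : Integrable (fun x ↦ A x * A x + B x * B x) μ := (hint hA hA).add (hint hB hB)
  have hcross : Integrable (fun x ↦ A x * C x - A x * B x) μ := (hint hA hC).sub (hint hA hB)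
  rw [← integral_add (hint hA hA) (hint hB hB), ← integral_add hsquares (hint hC hC),
    ← integral_sub (hint hA hC) (hint hA hB), ← integral_sub hcross (hint hB hC),
    ← integral_const_mul, ← integral_add (by exact hsquares.add (hint hC hC))
      ((by exact hcross.sub (hint hB hC) : Integrable _ μ).const_mul 2)]
  congr! 2
  ring

variable [SFinite μ]

theorem integral_sq_symmTensor_combination {e p Y₁ Y₂ g₁ g₂ : α → ℝ} (he : MemLp e 2 μ)
    (hp : MemLp p 2 μ) (hY₁ : MemLp Y₁ 2 μ) (hY₂ : MemLp Y₂ 2 μ) (hg₁ : MemLp g₁ 2 μ)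
    (hg₂ : MemLp g₂ 2 μ) (heY₁ : ∫ x, e x * Y₁ x ∂μ = 0) (heY₂ : ∫ x, e x * Y₂ x ∂μ = 0)
    (heg₁ : ∫ x, e x * g₁ x ∂μ = 0) (heg₂ : ∫ x, e x * g₂ x ∂μ = 0) :
    ∫ q, (symmTensor p e q - symmTensor Y₁ g₂ q + symmTensor Y₂ g₁ q) ^ 2 ∂μ.prod μ =
      2 * ((∫ x, e x ^ 2 ∂μ) * (∫ x, p x ^ 2 ∂μ) + (∫ x, p x * e x ∂μ) ^ 2 +
        (∫ x, Y₁ x ^ 2 ∂μ) * (∫ x, g₂ x ^ 2 ∂μ) + (∫ x, Y₁ x * g₂ x ∂μ) ^ 2 +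
        (∫ x, Y₂ x ^ 2 ∂μ) * (∫ x, g₁ x ^ 2 ∂μ) + (∫ x, Y₂ x * g₁ x ∂μ) ^ 2) -
      4 * ((∫ x, Y₁ x * Y₂ x ∂μ) * (∫ x, g₁ x * g₂ x ∂μ) +
        (∫ x, Y₁ x * g₁ x ∂μ) * ∫ x, Y₂ x * g₂ x ∂μ) := by
  rw [integral_sq_sub_add (memLp_symmTensor hp he) (memLp_symmTensor hY₁ hg₂)
    (memLp_symmTensor hY₂ hg₁), integral_symmTensor_mul hp he hp he,
    integral_symmTensor_mul hY₁ hg₂ hY₁ hg₂, integral_symmTensor_mul hY₂ hg₁ hY₂ hg₁,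
    integral_symmTensor_mul hp he hY₁ hg₂, integral_symmTensor_mul hp he hY₂ hg₁,
    integral_symmTensor_mul hY₁ hg₂ hY₂ hg₁, heY₁, heY₂, heg₁, heg₂]
  simp only [← sq, mul_comm (e _), mul_comm (g₁ _) (Y₂ _), mul_comm (g₂ _)]
  ring

theorem le_integral_sum_sq_symmTensor_combination {ι : Type*} [Fintype ι] [DecidableEq ι]
    {e : α → ℝ} {p : ι → ι → α → ℝ} {Y g : ι → α → ℝ} {s : ℝ} (he : MemLp e 2 μ)
    (hp : ∀ a b, MemLp (p a b) 2 μ) (hY : ∀ a, MemLp (Y a) 2 μ) (hg : ∀ a, MemLp (g a) 2 μ)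
    (heY : ∀ a, ∫ x, e x * Y a x ∂μ = 0) (heg : ∀ a, ∫ x, e x * g a x ∂μ = 0)
    (hYY : ∀ a b, ∫ x, Y a x * Y b x ∂μ = if a = b then s else 0)
    (hYg : ∑ a, ∫ x, Y a x * g a x ∂μ = 0) :
    2 * (∫ x, e x ^ 2 ∂μ) * (∑ a, ∑ b, ∫ x, p a b x ^ 2 ∂μ) +
      4 * s * (Fintype.card ι - 1) * ∑ a, ∫ x, g a x ^ 2 ∂μ ≤
      ∫ q, ∑ a, ∑ b, (symmTensor (p a b) e q - symmTensor (Y a) (g b) q +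
        symmTensor (Y b) (g a) q) ^ 2 ∂μ.prod μ := by
  have hint (a b : ι) : Integrable (fun q ↦ (symmTensor (p a b) e q -
      symmTensor (Y a) (g b) q + symmTensor (Y b) (g a) q) ^ 2) (μ.prod μ) :=
    (((memLp_symmTensor (hp a b) he).sub (memLp_symmTensor (hY a) (hg b))).add
      (memLp_symmTensor (hY b) (hg a))).integrable_sq
  have hpair (a b : ι) :
      2 * (∫ x, e x ^ 2 ∂μ) * (∫ x, p a b x ^ 2 ∂μ) +
        2 * s * ((∫ x, g a x ^ 2 ∂μ) + ∫ x, g b x ^ 2 ∂μ) -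
        4 * ((if a = b then s * ∫ x, g a x ^ 2 ∂μ else 0) +
          (∫ x, Y a x * g a x ∂μ) * ∫ x, Y b x * g b x ∂μ) ≤
      ∫ q, (symmTensor (p a b) e q - symmTensor (Y a) (g b) q +
        symmTensor (Y b) (g a) q) ^ 2 ∂μ.prod μ := by
    have hYsq (a : ι) : ∫ x, Y a x ^ 2 ∂μ = s := by simpa [sq] using hYY a a
    have hcross : (if a = b then s * ∫ x, g a x ^ 2 ∂μ else 0) =
        (∫ x, Y a x * Y b x ∂μ) * ∫ x, g a x * g b x ∂μ := by
      rw [hYY]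
      split_ifs with hab
      · simp only [hab, sq]
      · rw [zero_mul]
    rw [integral_sq_symmTensor_combination he (hp a b) (hY a) (hY b) (hg a) (hg b) (heY a)
      (heY b) (heg a) (heg b), hYsq, hYsq, hcross]
    linarith [sq_nonneg (∫ x, p a b x * e x ∂μ), sq_nonneg (∫ x, Y a x * g b x ∂μ),
      sq_nonneg (∫ x, Y b x * g a x ∂μ)]
  rw [integral_finsetSum _ fun a _ ↦ integrable_finsetSum _ fun b _ ↦ hint a b]
  simp only [integral_finsetSum Finset.univ fun b _ ↦ hint _ b]
  refine le_of_eq_of_le ?_ (Finset.sum_le_sum fun a _ ↦ Finset.sum_le_sum fun b _ ↦ hpair a b)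
  simp only [Finset.sum_sub_distrib, Finset.sum_add_distrib, ← Finset.mul_sum, hYg,
    mul_zero, Finset.sum_const_zero, Finset.sum_ite_eq, Finset.mem_univ, if_true,
    Finset.sum_const, Finset.card_univ, nsmul_eq_mul]
  ring

end Rigidity

section RadialMoments

variable {ι : Type*} [Fintype ι]

theorem integral_radial_mul_coord (φ : ℝ → ℝ) (a : ι) :
    ∫ x : EuclideanSpace ℝ ι, φ ‖x‖ * x a = 0 := by
  have hneg := integral_neg_eq_self (fun x : EuclideanSpace ℝ ι ↦ φ ‖x‖ * x a) volume
  simp only [norm_neg, PiLp.neg_apply, mul_neg, integral_neg] at hneg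
  linarith

theorem integral_radial_mul_coord_mul_coord [DecidableEq ι] (φ : ℝ → ℝ) (a b i₀ : ι) :
    ∫ x : EuclideanSpace ℝ ι, φ ‖x‖ * (x a * x b) =
      if a = b then ∫ x : EuclideanSpace ℝ ι, φ ‖x‖ * x i₀ ^ 2 else 0 := by
  have hinvariant (T : EuclideanSpace ℝ ι ≃ₗᵢ[ℝ] EuclideanSpace ℝ ι) :
      ∫ x, φ ‖x‖ * (T x a * T x b) = ∫ x : EuclideanSpace ℝ ι, φ ‖x‖ * (x a * x b) := by
    simpa only [T.norm_map] using T.measurePreserving.integral_comp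
      T.toHomeomorph.measurableEmbedding fun x ↦ φ ‖x‖ * (x a * x b)
  split_ifs with hab
  · have hswap := hinvariant (LinearIsometryEquiv.piLpCongrLeft 2 ℝ ℝ (Equiv.swap a i₀))
    subst hab
    simp only [LinearIsometryEquiv.piLpCongrLeft_apply, Equiv.piCongrLeft'_apply,
      Equiv.symm_swap, Equiv.swap_apply_left] at hswap
    simpa only [← sq] using hswap.symm
  · have hflip := hinvariant (LinearIsometryEquiv.piLpCongrRight 2 fun i ↦
      if i = a then LinearIsometryEquiv.neg ℝ else LinearIsometryEquiv.refl ℝ ℝ)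
    simp [Ne.symm hab, integral_neg] at hflip
    linarith

end RadialMoments

section KernelLowerBound

theorem rpow_mul_wedgeSq_le_landauForm {γ : ℝ} (hγ0 : γ ≤ 0) (x y : E3) (w : Fin 3 → ℝ) :
    2 ^ (γ / 2) * (jap x ^ γ * jap y ^ γ * wedgeSq (x - y) w) ≤ landauForm γ (x - y) w w := by
  rcases eq_or_ne (x - y) 0 with hz | hz
  · simpa [hz, wedgeSq] using landauForm_self_nonneg γ 0 w
  · have hnorm : 0 < ‖x - y‖ := norm_pos_iff.mpr hz
    have hpos (x : E3) : 0 < 1 + ‖x‖ ^ 2 := by positivity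
    have hsq : ‖x - y‖ ^ 2 ≤ 2 * ((1 + ‖x‖ ^ 2) * (1 + ‖y‖ ^ 2)) := by
      nlinarith [norm_sub_le x y, sq_nonneg (‖x‖ - ‖y‖), sq_nonneg (‖x‖ * ‖y‖)]
    rw [landauForm_self hz, ← mul_assoc]
    refine mul_le_mul_of_nonneg_right ?_ (wedgeSq_nonneg _ _)
    calc 2 ^ (γ / 2) * (jap x ^ γ * jap y ^ γ)
        = (2 * ((1 + ‖x‖ ^ 2) * (1 + ‖y‖ ^ 2))) ^ (γ / 2) := by
          rw [jap_rpow, jap_rpow, Real.mul_rpow zero_le_two (by positivity),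
            Real.mul_rpow (hpos x).le (hpos y).le]
      _ ≤ (‖x - y‖ ^ 2) ^ (γ / 2) :=
          Real.rpow_le_rpow_of_nonpos (by positivity) hsq (by linarith)
      _ = ‖x - y‖ ^ γ := by
          rw [← Real.rpow_natCast, ← Real.rpow_mul hnorm.le]
          congr 1
          push_cast
          ring

end KernelLowerBound

section WeightedRigidity

variable {γ : ℝ} {f : E3 → ℝ}

theorem jap_rpow_half_mul_self (s : ℝ) (x : E3) :
    jap x ^ (s / 2) * jap x ^ (s / 2) = jap x ^ s := by
  rw [← Real.rpow_add (jap_pos x), add_halves]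

theorem sum_sq_symmTensor_eq_wedgeSq (γ : ℝ) (f : E3 → ℝ) (q : E3 × E3) :
    ∑ a, ∑ b, (symmTensor (fun x ↦ jap x ^ (γ / 2) *
        (x a * maxwellDeriv b f x - x b * maxwellDeriv a f x))
          (fun x ↦ jap x ^ (γ / 2) * sqrtM x) q -
        symmTensor (fun x ↦ jap x ^ (γ / 2) * sqrtM x * x a)
          (fun x ↦ jap x ^ (γ / 2) * maxwellDeriv b f x) q +
        symmTensor (fun x ↦ jap x ^ (γ / 2) * sqrtM x * x b)
          (fun x ↦ jap x ^ (γ / 2) * maxwellDeriv a f x) q) ^ 2 =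
      2 * (jap q.1 ^ γ * jap q.2 ^ γ * wedgeSq (q.1 - q.2) (pairDiff f q.1 q.2)) := by
  rw [wedgeSq_eq_sum, ← jap_rpow_half_mul_self γ q.1, ← jap_rpow_half_mul_self γ q.2]
  simp only [Finset.mul_sum]
  refine Finset.sum_congr rfl fun a _ ↦ Finset.sum_congr rfl fun b _ ↦ ?_
  simp only [symmTensor, pairDiff, PiLp.sub_apply]
  ring

/-- The dissipation `∫ ⟨ξ⟩^γ |ξ ∧ Af|²` in the angular directions. -/
noncomputable def angularDissipation (γ : ℝ) (f : E3 → ℝ) : ℝ :=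
  ∫ x, jap x ^ γ * wedgeSq x fun i ↦ maxwellDeriv i f x

/-- The dissipation `∫ ⟨ξ⟩^γ |Af|²`. -/
noncomputable def gradientDissipation (γ : ℝ) (f : E3 → ℝ) : ℝ :=
  ∑ i, ∫ x, jap x ^ γ * maxwellDeriv i f x ^ 2

theorem isSchwartz_weighted_angular (γ : ℝ) (hf : IsSchwartz f) (a b : Fin 3) :
    IsSchwartz fun x ↦ jap x ^ (γ / 2) *
      (x a * maxwellDeriv b f x - x b * maxwellDeriv a f x) :=
  (((hf.maxwellDeriv b).mul_left (by fun_prop)).sub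
    ((hf.maxwellDeriv a).mul_left (by fun_prop))).mul_left (by fun_prop)

theorem sum_integral_sq_eq_angularDissipation (γ : ℝ) (hf : IsSchwartz f) :
    ∑ a, ∑ b, ∫ x, (jap x ^ (γ / 2) *
        (x a * maxwellDeriv b f x - x b * maxwellDeriv a f x)) ^ 2 =
      2 * angularDissipation γ f := by
  have hint (a b : Fin 3) : Integrable fun x ↦ (jap x ^ (γ / 2) *
      (x a * maxwellDeriv b f x - x b * maxwellDeriv a f x)) ^ 2 :=
    (isSchwartz_weighted_angular γ hf a b).memLp_two.integrable_sq
  simp only [angularDissipation, wedgeSq_eq_sum, ← integral_const_mul]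
  simp only [← integral_finsetSum Finset.univ fun b _ ↦ hint _ b]
  rw [← integral_finsetSum _ fun a _ ↦ integrable_finsetSum _ fun b _ ↦ hint a b]
  refine integral_congr_ae (.of_forall fun x ↦ ?_)
  simp only [mul_pow, sq (jap x ^ (γ / 2)), jap_rpow_half_mul_self, ← Finset.mul_sum]
  ring

/-- The mass `∫ ⟨ξ⟩^γ M` of the weighted Maxwellian. -/
noncomputable def weightedMass (γ : ℝ) : ℝ := ∫ x, jap x ^ γ * Mx x

/-- The second moment `∫ ⟨ξ⟩^γ M ξ₁²` of the weighted Maxwellian. -/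
noncomputable def weightedMoment (γ : ℝ) : ℝ := ∫ x, jap x ^ γ * Mx x * x 0 ^ 2

theorem exists_radial_jap_rpow_mul_Mx (γ : ℝ) :
    ∃ φ : ℝ → ℝ, ∀ x, jap x ^ γ * Mx x = φ ‖x‖ :=
  ⟨fun r ↦ √(1 + r ^ 2) ^ γ * ((2 * π) ^ (-(3 : ℝ) / 2) * Real.exp (-r ^ 2 / 2)), fun _ ↦ rfl⟩

theorem integral_jap_rpow_mul_Mx_mul_coord (γ : ℝ) (i : Fin 3) :
    ∫ x, jap x ^ γ * Mx x * x i = 0 := by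
  obtain ⟨φ, hφ⟩ := exists_radial_jap_rpow_mul_Mx γ
  simpa only [hφ] using integral_radial_mul_coord φ i

theorem integral_jap_rpow_mul_Mx_mul_coord_mul_coord (γ : ℝ) (i j : Fin 3) :
    ∫ x, jap x ^ γ * Mx x * (x i * x j) = if i = j then weightedMoment γ else 0 := by
  obtain ⟨φ, hφ⟩ := exists_radial_jap_rpow_mul_Mx γ
  simpa only [weightedMoment, hφ] using integral_radial_mul_coord_mul_coord φ i j 0

theorem integral_sqrt_weight_mul_coord (a : Fin 3) :
    ∫ x, jap x ^ (γ / 2) * sqrtM x * (jap x ^ (γ / 2) * sqrtM x * x a) = 0 := by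
  rw [← integral_jap_rpow_mul_Mx_mul_coord γ a]
  simp only [← sqrtM_mul_self, ← jap_rpow_half_mul_self γ]
  congr! 2
  ring

theorem integral_sqrt_weight_coord_mul_coord (a b : Fin 3) :
    ∫ x, jap x ^ (γ / 2) * sqrtM x * x a * (jap x ^ (γ / 2) * sqrtM x * x b) =
      if a = b then weightedMoment γ else 0 := by
  rw [← integral_jap_rpow_mul_Mx_mul_coord_mul_coord]
  simp only [← sqrtM_mul_self, ← jap_rpow_half_mul_self γ]
  congr! 2
  ring

theorem dissipation_le_integral_wedgeSq (hf : IsSchwartz f)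
    (hmean : ∀ i, ∫ x, jap x ^ γ * sqrtM x * maxwellDeriv i f x = 0)
    (htrace : ∑ i, ∫ x, jap x ^ γ * sqrtM x * x i * maxwellDeriv i f x = 0) :
    2 * (weightedMass γ * angularDissipation γ f +
        2 * weightedMoment γ * gradientDissipation γ f) ≤
      ∫ q : E3 × E3, jap q.1 ^ γ * jap q.2 ^ γ *
        wedgeSq (q.1 - q.2) (pairDiff f q.1 q.2) := by
  have he : IsSchwartz fun x ↦ jap x ^ (γ / 2) * sqrtM x := isSchwartz_sqrtM.mul_left (by fun_prop)
  have hY (a : Fin 3) : IsSchwartz fun x ↦ jap x ^ (γ / 2) * sqrtM x * x a :=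
    he.mul_right (by fun_prop)
  have hg (a : Fin 3) : IsSchwartz fun x ↦ jap x ^ (γ / 2) * maxwellDeriv a f x :=
    (hf.maxwellDeriv a).mul_left (by fun_prop)
  have heg (a : Fin 3) :
      ∫ x, jap x ^ (γ / 2) * sqrtM x * (jap x ^ (γ / 2) * maxwellDeriv a f x) = 0 := by
    rw [← hmean a]
    simp only [← jap_rpow_half_mul_self γ]
    congr! 2
    ring
  have hYg : ∑ a, ∫ x, jap x ^ (γ / 2) * sqrtM x * x a *
      (jap x ^ (γ / 2) * maxwellDeriv a f x) = 0 := by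
    rw [← htrace]
    simp only [← jap_rpow_half_mul_self γ]
    congr! 3
    ring
  have hrigid := le_integral_sum_sq_symmTensor_combination he.memLp_two
    (fun a b ↦ (isSchwartz_weighted_angular γ hf a b).memLp_two) (fun a ↦ (hY a).memLp_two)
    (fun a ↦ (hg a).memLp_two)
    integral_sqrt_weight_mul_coord heg integral_sqrt_weight_coord_mul_coord hYg
  simp only [← Measure.volume_eq_prod, sum_sq_symmTensor_eq_wedgeSq,
    sum_integral_sq_eq_angularDissipation γ hf, integral_const_mul] at hrigid
  simp only [mul_pow, sq (jap _ ^ (γ / 2)), jap_rpow_half_mul_self, sq (sqrtM _),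
    sqrtM_mul_self] at hrigid
  rw [weightedMass, gradientDissipation]
  norm_num at hrigid
  linarith

theorem rpow_mul_dissipation_le_landauDirichlet (hγ : -5 < γ) (hγ0 : γ ≤ 0) (hf : IsSchwartz f)
    (hmean : ∀ i, ∫ x, jap x ^ γ * sqrtM x * maxwellDeriv i f x = 0)
    (htrace : ∑ i, ∫ x, jap x ^ γ * sqrtM x * x i * maxwellDeriv i f x = 0) :
    2 ^ (γ / 2) * (weightedMass γ * angularDissipation γ f +
        2 * weightedMoment γ * gradientDissipation γ f) ≤ landauDirichlet γ f f := by
  have hkernel : 2 ^ (γ / 2) * ∫ q : E3 × E3, jap q.1 ^ γ * jap q.2 ^ γ *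
      wedgeSq (q.1 - q.2) (pairDiff f q.1 q.2) ≤ 2 * landauDirichlet γ f f := by
    rw [landauDirichlet, ← mul_assoc, mul_one_div_cancel two_ne_zero, one_mul,
      ← integral_const_mul]
    refine integral_mono_of_nonneg (.of_forall fun q ↦ ?_)
      (integrable_landauForm_pairDiff hγ hf hf)
      (.of_forall fun q ↦ rpow_mul_wedgeSq_le_landauForm hγ0 q.1 q.2 _)
    have := wedgeSq_nonneg (q.1 - q.2) (pairDiff f q.1 q.2)
    have := jap_pos q.1
    have := jap_pos q.2
    positivity
  have hrigid := mul_le_mul_of_nonneg_left (dissipation_le_integral_wedgeSq hf hmean htrace)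
    (Real.rpow_nonneg zero_le_two (γ / 2))
  linarith

end WeightedRigidity

section Moments

theorem integrable_Mx_mul {p : E3 → ℝ} (hp : p.HasTemperateGrowth) :
    Integrable fun x ↦ Mx x * p x :=
  (isSchwartz_Mx.mul_right hp).integrable

theorem integral_Mx : ∫ x, Mx x = 1 := by
  have hgauss := GaussianFourier.integral_rexp_neg_mul_sq_norm (V := E3) (b := 1 / 2) (by norm_num)
  simp only [Mx, integral_const_mul, show ∀ x : E3, -‖x‖ ^ 2 / 2 = -(1 / 2) * ‖x‖ ^ 2 by
    intro x; ring, hgauss, finrank_euclideanSpace_fin]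
  rw [show π / (1 / 2) = 2 * π by ring, ← Real.rpow_add (by positivity)]
  norm_num

theorem integral_Mx_mul_coord_mul (i : Fin 3) {p : E3 → ℝ} (hp : p.HasTemperateGrowth) :
    ∫ x, Mx x * (x i * p x) = ∫ x, Mx x * pd i p x := by
  have hparts := integral_maxwellDeriv_mul i (isSchwartz_sqrtM.mul_left hp) isSchwartz_sqrtM
  simp only [maxwellDeriv_mul_sqrtM i (hp.1.differentiable (by simp)), pd_sqrtM] at hparts
  simp only [← sqrtM_mul_self]
  calc _ = ∫ x, p x * sqrtM x * (x i / 2 * sqrtM x - -(x i / 2) * sqrtM x) := by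
        congr! 2; ring
    _ = _ := by rw [← hparts]; congr! 2; ring

theorem integral_Mx_mul_coord (i : Fin 3) : ∫ x, Mx x * x i = 0 := by
  simpa [pd_const] using integral_Mx_mul_coord_mul i (.const 1)

theorem integral_Mx_mul_coord_mul_coord (i j : Fin 3) :
    ∫ x, Mx x * (x i * x j) = if i = j then 1 else 0 := by
  simp only [integral_Mx_mul_coord_mul i (hasTemperateGrowth_coord j), pd_coord,
    integral_mul_const, integral_Mx, one_mul]

theorem integral_Mx_mul_norm_sq_mul {p : E3 → ℝ} (hp : p.HasTemperateGrowth) :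
    ∫ x, Mx x * (‖x‖ ^ 2 * p x) = ∑ i, ∫ x, Mx x * pd i (fun y ↦ y i * p y) x := by
  have hparts (i : Fin 3) :=
    integral_Mx_mul_coord_mul i (p := fun x ↦ x i * p x) (by fun_prop)
  simp only [← hparts]
  rw [← integral_finsetSum _ fun i _ ↦ integrable_Mx_mul (by fun_prop)]
  simp only [EuclideanSpace.real_norm_sq_eq, Finset.sum_mul, Finset.mul_sum]
  congr! 3
  ring

theorem integral_Mx_mul_norm_sq : ∫ x, Mx x * ‖x‖ ^ 2 = 3 := by
  simpa [pd_coord, integral_Mx] using integral_Mx_mul_norm_sq_mul (.const 1)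

theorem integral_Mx_mul_coord_mul_norm_sq (i : Fin 3) : ∫ x, Mx x * (x i * ‖x‖ ^ 2) = 0 := by
  rw [integral_Mx_mul_coord_mul i (by fun_prop)]
  simp only [pd_norm_sq, mul_left_comm _ (2 : ℝ), integral_const_mul, integral_Mx_mul_coord,
    mul_zero]

theorem integral_Mx_mul_norm_pow_four : ∫ x, Mx x * ‖x‖ ^ 4 = 15 := by
  have hpd (i : Fin 3) (x : E3) : pd i (fun y ↦ y i * ‖y‖ ^ 2) x = ‖x‖ ^ 2 + 2 * (x i * x i) := by
    rw [pd_mul i (by fun_prop) (hasStrictFDerivAt_norm_sq x).differentiableAt, pd_norm_sq,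
      pd_coord, if_pos rfl]
    ring
  have hsummand (i : Fin 3) : ∫ x, Mx x * pd i (fun y ↦ y i * ‖y‖ ^ 2) x = 5 := by
    simp only [hpd, mul_add, mul_left_comm _ (2 : ℝ)]
    rw [integral_add (integrable_Mx_mul (by fun_prop))
      ((integrable_Mx_mul (by fun_prop)).const_mul 2), integral_const_mul,
      integral_Mx_mul_norm_sq, integral_Mx_mul_coord_mul_coord, if_pos rfl]
    norm_num
  calc ∫ x, Mx x * ‖x‖ ^ 4 = ∫ x, Mx x * (‖x‖ ^ 2 * ‖x‖ ^ 2) := by congr! 2; ring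
    _ = 15 := by
      rw [integral_Mx_mul_norm_sq_mul (by fun_prop)]
      simp only [hsummand, Finset.sum_const, Finset.card_univ, Fintype.card_fin]
      norm_num

end Moments

section RotationPoincare

open scoped ENNReal

theorem sq_lintegral_le {α : Type*} [MeasurableSpace α] (μ : Measure α) {f : α → ℝ≥0∞}
    (hf : AEMeasurable f μ) : (∫⁻ a, f a ∂μ) ^ 2 ≤ μ Set.univ * ∫⁻ a, f a ^ 2 ∂μ := by
  have hholder := ENNReal.lintegral_mul_le_Lp_mul_Lq μ Real.HolderConjugate.two_two
    (aemeasurable_const (b := 1)) hf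
  simp only [Pi.mul_apply, one_mul, lintegral_const, ENNReal.rpow_two, one_pow] at hholder
  calc (∫⁻ a, f a ∂μ) ^ 2
      ≤ (μ Set.univ ^ (1 / 2 : ℝ) * (∫⁻ a, f a ^ 2 ∂μ) ^ (1 / 2 : ℝ)) ^ 2 := by gcongr
    _ = μ Set.univ * ∫⁻ a, f a ^ 2 ∂μ := by
      rw [mul_pow, ← ENNReal.rpow_mul_natCast, ← ENNReal.rpow_mul_natCast]
      norm_num

theorem enorm_sq_mul_ofReal {G : Type*} [NormedAddCommGroup G] (a : G) (b : ℝ) :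
    ‖a‖ₑ ^ 2 * ENNReal.ofReal b = ENNReal.ofReal (‖a‖ ^ 2 * b) := by
  rw [ENNReal.ofReal_mul (by positivity), ENNReal.ofReal_pow (norm_nonneg _), ofReal_norm]

variable {E : Type*} [NormedAddCommGroup E] [InnerProductSpace ℝ E]

theorem norm_sq_add_norm_sq_rotation (θ : ℝ) (x y : E) :
    ‖cos θ • x + sin θ • y‖ ^ 2 + ‖-sin θ • x + cos θ • y‖ ^ 2 = ‖x‖ ^ 2 + ‖y‖ ^ 2 := by
  rw [norm_add_sq_real, norm_add_sq_real]
  simp only [norm_smul, mul_pow, inner_smul_left, inner_smul_right, norm_neg, Real.norm_eq_abs,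
    sq_abs, conj_trivial]
  linear_combination (‖x‖ ^ 2 + ‖y‖ ^ 2) * sin_sq_add_cos_sq θ

variable {F : Type*} [NormedAddCommGroup F] [NormedSpace ℝ F]

theorem enorm_sub_sq_le_lintegral_rotation {h : E → F} (hh : ContDiff ℝ 1 h) (x y : E) :
    ‖h y - h x‖ₑ ^ 2 ≤ ENNReal.ofReal (π / 2) * ∫⁻ θ in Set.Icc 0 (π / 2),
      ‖fderiv ℝ h (cos θ • x + sin θ • y)‖ₑ ^ 2 * ‖-sin θ • x + cos θ • y‖ₑ ^ 2 := by
  have hderiv (θ : ℝ) : HasDerivAt (fun θ ↦ h (cos θ • x + sin θ • y))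
      (fderiv ℝ h (cos θ • x + sin θ • y) (-sin θ • x + cos θ • y)) θ :=
    (hh.differentiable one_ne_zero _).hasFDerivAt.comp_hasDerivAt θ
      (((hasDerivAt_cos θ).smul_const x).add ((hasDerivAt_sin θ).smul_const y))
  have hpath : ContDiff ℝ 1 fun θ ↦ h (cos θ • x + sin θ • y) := hh.comp (by fun_prop)
  calc ‖h y - h x‖ₑ ^ 2
      ≤ (∫⁻ θ in Set.Icc 0 (π / 2), ‖deriv (fun θ ↦ h (cos θ • x + sin θ • y)) θ‖ₑ) ^ 2 := by
        gcongr
        simpa using enorm_sub_le_lintegral_deriv_of_contDiffOn_Icc hpath.contDiffOn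
          (by positivity : 0 ≤ π / 2)
    _ ≤ ENNReal.ofReal (π / 2) * ∫⁻ θ in Set.Icc 0 (π / 2),
          ‖deriv (fun θ ↦ h (cos θ • x + sin θ • y)) θ‖ₑ ^ 2 := by
        simpa using sq_lintegral_le (volume.restrict (Set.Icc 0 (π / 2)))
          (hpath.continuous_deriv le_rfl).enorm.aemeasurable
    _ ≤ _ := by
        gcongr with θ
        rw [(hderiv θ).deriv, ← mul_pow]
        gcongr
        exact ContinuousLinearMap.le_opENorm _ _

variable [FiniteDimensional ℝ E] [MeasurableSpace E] [BorelSpace E]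

theorem measurePreserving_rotation (θ : ℝ) :
    MeasurePreserving fun p : E × E ↦ (cos θ • p.1 + sin θ • p.2, -sin θ • p.1 + cos θ • p.2) := by
  let R : WithLp 2 (E × E) →ₗᵢ[ℝ] WithLp 2 (E × E) :=
    { toLinearMap := (WithLp.linearEquiv 2 ℝ (E × E)).symm.toLinearMap ∘ₗ
        (ContinuousLinearMap.rotation θ).toLinearMap ∘ₗ (WithLp.linearEquiv 2 ℝ (E × E)).toLinearMap
      norm_map' := fun p ↦ by
        rw [← sq_eq_sq₀ (norm_nonneg _) (norm_nonneg _), WithLp.prod_norm_sq_eq_of_L2,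
          WithLp.prod_norm_sq_eq_of_L2]
        exact norm_sq_add_norm_sq_rotation θ p.fst p.snd }
  exact (WithLp.volume_preserving_ofLp E E).comp
    ((R.toLinearIsometryEquiv rfl).measurePreserving.comp (WithLp.volume_preserving_toLp E E))

theorem lintegral_enorm_sub_sq_mul_le {h : E → F} (hh : ContDiff ℝ 1 h) {w κ : E → ℝ≥0∞}
    (hw : Measurable w) (hκ : Measurable κ)
    (hrot : ∀ θ x y, w x * w y ≤ w (cos θ • x + sin θ • y) * κ (-sin θ • x + cos θ • y)) :
    ∫⁻ p : E × E, ‖h p.2 - h p.1‖ₑ ^ 2 * (w p.1 * w p.2) ≤ ENNReal.ofReal (π / 2) ^ 2 *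
      ((∫⁻ x, ‖fderiv ℝ h x‖ₑ ^ 2 * w x) * ∫⁻ y, ‖y‖ₑ ^ 2 * κ y) := by
  have : Continuous fun x ↦ ‖fderiv ℝ h x‖ₑ := (hh.continuous_fderiv one_ne_zero).enorm
  let Φ (p : E × E) : ℝ≥0∞ := (‖fderiv ℝ h p.1‖ₑ ^ 2 * w p.1) * (‖p.2‖ₑ ^ 2 * κ p.2)
  have hΦ : Measurable Φ := by fun_prop
  let R (θ : ℝ) (p : E × E) : E × E := (cos θ • p.1 + sin θ • p.2, -sin θ • p.1 + cos θ • p.2)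
  calc ∫⁻ p : E × E, ‖h p.2 - h p.1‖ₑ ^ 2 * (w p.1 * w p.2)
      ≤ ∫⁻ p, ENNReal.ofReal (π / 2) * ∫⁻ θ in Set.Icc 0 (π / 2), Φ (R θ p) := by
        refine lintegral_mono fun p ↦ ?_
        refine (mul_le_mul_left (enorm_sub_sq_le_lintegral_rotation hh p.1 p.2) _).trans ?_
        rw [mul_assoc, ← lintegral_mul_const _ (by fun_prop)]
        gcongr with θ
        refine (mul_le_mul_right (hrot θ p.1 p.2) _).trans_eq (by simp only [Φ, R]; ring)
    _ = ENNReal.ofReal (π / 2) * ∫⁻ θ in Set.Icc 0 (π / 2), ∫⁻ p, Φ (R θ p) := by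
        rw [lintegral_const_mul, lintegral_lintegral_swap]
        all_goals fun_prop
    _ = ENNReal.ofReal (π / 2) * ∫⁻ θ in Set.Icc 0 (π / 2), ∫⁻ p, Φ p := by
        simp only [fun θ ↦ (measurePreserving_rotation θ).lintegral_comp hΦ, R]
    _ = _ := by
        rw [Measure.volume_eq_prod, lintegral_prod_mul (f := fun x ↦ ‖fderiv ℝ h x‖ₑ ^ 2 * w x)
          (g := fun y ↦ ‖y‖ₑ ^ 2 * κ y) (by fun_prop) (by fun_prop)]
        simp only [setLIntegral_const, Real.volume_Icc, sub_zero]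
        ring

theorem integral_norm_sub_sq_mul_le {h : E → F} (hh : ContDiff ℝ 1 h) {w κ : E → ℝ}
    (hw : Measurable w) (hκ : Measurable κ) (hw0 : ∀ x, 0 ≤ w x) (hκ0 : ∀ x, 0 ≤ κ x)
    (hrot : ∀ θ x y, w x * w y ≤ w (cos θ • x + sin θ • y) * κ (-sin θ • x + cos θ • y))
    (hdiff : Integrable fun p : E × E ↦ ‖h p.2 - h p.1‖ ^ 2 * (w p.1 * w p.2))
    (hgrad : Integrable fun x ↦ ‖fderiv ℝ h x‖ ^ 2 * w x)
    (hmoment : Integrable fun y ↦ ‖y‖ ^ 2 * κ y) :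
    ∫ p : E × E, ‖h p.2 - h p.1‖ ^ 2 * (w p.1 * w p.2) ≤
      (π / 2) ^ 2 * ((∫ x, ‖fderiv ℝ h x‖ ^ 2 * w x) * ∫ y, ‖y‖ ^ 2 * κ y) := by
  have hlintegral := lintegral_enorm_sub_sq_mul_le hh hw.ennreal_ofReal hκ.ennreal_ofReal
    fun θ x y ↦ by
      simp only [← ENNReal.ofReal_mul (hw0 _)]
      exact ENNReal.ofReal_le_ofReal (hrot θ x y)
  have hgrad0 (x : E) : 0 ≤ ‖fderiv ℝ h x‖ ^ 2 * w x := mul_nonneg (sq_nonneg _) (hw0 x)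
  have hmoment0 (y : E) : 0 ≤ ‖y‖ ^ 2 * κ y := mul_nonneg (sq_nonneg _) (hκ0 y)
  simp only [← ENNReal.ofReal_mul (hw0 _), enorm_sq_mul_ofReal] at hlintegral
  rwa [← ofReal_integral_eq_lintegral_ofReal hdiff (.of_forall fun p ↦
      mul_nonneg (sq_nonneg _) (mul_nonneg (hw0 _) (hw0 _))),
    ← ofReal_integral_eq_lintegral_ofReal hgrad (.of_forall hgrad0),
    ← ofReal_integral_eq_lintegral_ofReal hmoment (.of_forall hmoment0),
    ← ENNReal.ofReal_mul (integral_nonneg hgrad0), ← ENNReal.ofReal_pow (by positivity),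
    ← ENNReal.ofReal_mul (by positivity), ENNReal.ofReal_le_ofReal_iff
      (mul_nonneg (sq_nonneg _) (mul_nonneg (integral_nonneg hgrad0) (integral_nonneg hmoment0)))]
    at hlintegral

end RotationPoincare

section WeightedPoincare

theorem integral_sq_mul_sub_mul {α : Type*} [MeasurableSpace α] {μ : Measure α} [SFinite μ]
    {a b : α → ℝ} (ha : MemLp a 2 μ) (hb : MemLp b 2 μ) :
    ∫ p : α × α, (a p.1 * b p.2 - b p.1 * a p.2) ^ 2 ∂μ.prod μ =
      2 * ((∫ x, a x ^ 2 ∂μ) * (∫ x, b x ^ 2 ∂μ) - (∫ x, a x * b x ∂μ) ^ 2) := by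
  have haa_bb := ha.integrable_sq.mul_prod hb.integrable_sq
  have hbb_aa := hb.integrable_sq.mul_prod ha.integrable_sq
  have hab_ab := (ha.integrable_mul hb).mul_prod (ha.integrable_mul hb)
  calc ∫ p : α × α, (a p.1 * b p.2 - b p.1 * a p.2) ^ 2 ∂μ.prod μ
      = ∫ p : α × α, (a p.1 ^ 2 * b p.2 ^ 2 + b p.1 ^ 2 * a p.2 ^ 2) -
          2 * ((a * b) p.1 * (a * b) p.2) ∂μ.prod μ := by
        congr! 2
        simp only [Pi.mul_apply]
        ring
    _ = _ := by
        rw [integral_sub (by exact haa_bb.add hbb_aa) (hab_ab.const_mul 2),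
          integral_add haa_bb hbb_aa, integral_const_mul, integral_prod_mul (a * b) (a * b),
          integral_prod_mul (fun x ↦ a x ^ 2) fun x ↦ b x ^ 2,
          integral_prod_mul (fun x ↦ b x ^ 2) fun x ↦ a x ^ 2]
        simp only [Pi.mul_apply]
        ring

variable {γ : ℝ} {f : E3 → ℝ}

theorem jap_rpow_mul_Mx_mul_le_rotation (hγ0 : γ ≤ 0) (θ : ℝ) (x y : E3) :
    jap x ^ γ * Mx x * (jap y ^ γ * Mx y) ≤
      jap (cos θ • x + sin θ • y) ^ γ * Mx (cos θ • x + sin θ • y) *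
        Mx (-sin θ • x + cos θ • y) := by
  have hrot := norm_sq_add_norm_sq_rotation θ x y
  set x' := cos θ • x + sin θ • y
  set y' := -sin θ • x + cos θ • y
  have hMx : Mx x * Mx y = Mx x' * Mx y' := by
    simp only [Mx, mul_mul_mul_comm _ (Real.exp _), ← Real.exp_add]
    congr 2
    linear_combination hrot / 2
  have hjap : jap x ^ γ * jap y ^ γ ≤ jap x' ^ γ := by
    simp only [jap_rpow]
    rw [← Real.mul_rpow (by positivity) (by positivity)]
    refine Real.rpow_le_rpow_of_nonpos (by positivity) ?_ (by linarith)
    nlinarith [sq_nonneg ‖y'‖, sq_nonneg (‖x‖ * ‖y‖)]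
  calc jap x ^ γ * Mx x * (jap y ^ γ * Mx y) = jap x ^ γ * jap y ^ γ * (Mx x * Mx y) := by ring
    _ ≤ jap x' ^ γ * (Mx x * Mx y) := by gcongr; exact mul_nonneg (Mx_pos x).le (Mx_pos y).le
    _ = jap x' ^ γ * Mx x' * Mx y' := by rw [hMx, mul_assoc]

theorem contDiff_div_sqrtM (hf : IsSchwartz f) : ContDiff ℝ 1 fun y ↦ f y / sqrtM y :=
  (hf.hasTemperateGrowth.1.div isSchwartz_sqrtM.hasTemperateGrowth.1
    fun y ↦ (sqrtM_pos y).ne').of_le (by simp)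

theorem norm_fderiv_div_sqrtM_sq_mul_Mx (hf : IsSchwartz f) (x : E3) :
    ‖fderiv ℝ (fun y ↦ f y / sqrtM y) x‖ ^ 2 * Mx x = ∑ i, maxwellDeriv i f x ^ 2 := by
  have hquot := (contDiff_div_sqrtM hf).differentiable one_ne_zero
  have hmaxwell (i : Fin 3) : maxwellDeriv i f x = pd i (fun y ↦ f y / sqrtM y) x * sqrtM x := by
    rw [← maxwellDeriv_mul_sqrtM i hquot]
    simp only [div_mul_cancel₀ _ (sqrtM_pos _).ne']
  rw [(EuclideanSpace.basisFun (Fin 3) ℝ).norm_dual, Finset.sum_mul]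
  simp only [hmaxwell, mul_pow, sq (sqrtM x), sqrtM_mul_self, pd, EuclideanSpace.basisFun_apply]

theorem integrable_jap_rpow_mul_sq (γ : ℝ) (hf : IsSchwartz f) :
    Integrable fun x ↦ jap x ^ γ * f x ^ 2 := by
  simpa only [sq] using
    ((hf.mul hf).mul_left (hasTemperateGrowth_jap_rpow γ)).integrable

theorem weightedMass_mul_integral_sq_le (hγ0 : γ ≤ 0) (hf : IsSchwartz f)
    (hmean : ∫ x, jap x ^ γ * sqrtM x * f x = 0) :
    weightedMass γ * ∫ x, jap x ^ γ * f x ^ 2 ≤ 3 * π ^ 2 / 8 * gradientDissipation γ f := by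
  have he : IsSchwartz fun x ↦ jap x ^ (γ / 2) * sqrtM x := isSchwartz_sqrtM.mul_left (by fun_prop)
  have hF : IsSchwartz fun x ↦ jap x ^ (γ / 2) * f x := hf.mul_left (by fun_prop)
  have hdiff (p : E3 × E3) : ‖f p.2 / sqrtM p.2 - f p.1 / sqrtM p.1‖ ^ 2 *
      (jap p.1 ^ γ * Mx p.1 * (jap p.2 ^ γ * Mx p.2)) =
      (jap p.1 ^ (γ / 2) * sqrtM p.1 * (jap p.2 ^ (γ / 2) * f p.2) -
        jap p.1 ^ (γ / 2) * f p.1 * (jap p.2 ^ (γ / 2) * sqrtM p.2)) ^ 2 := by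
    have h₁ := (sqrtM_pos p.1).ne'
    have h₂ := (sqrtM_pos p.2).ne'
    simp only [← sqrtM_mul_self, ← jap_rpow_half_mul_self γ, Real.norm_eq_abs, sq_abs]
    field_simp
  have hgrad (x : E3) : ‖fderiv ℝ (fun y ↦ f y / sqrtM y) x‖ ^ 2 * (jap x ^ γ * Mx x) =
      ∑ i, jap x ^ γ * maxwellDeriv i f x ^ 2 := by
    rw [mul_left_comm, norm_fderiv_div_sqrtM_sq_mul_Mx hf, Finset.mul_sum]
  have hpoincare := integral_norm_sub_sq_mul_le (contDiff_div_sqrtM hf)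
    (isSchwartz_Mx.mul_left (hasTemperateGrowth_jap_rpow γ)).continuous.measurable
    isSchwartz_Mx.continuous.measurable
    (fun x ↦ mul_nonneg (Real.rpow_nonneg (jap_pos x).le _) (Mx_pos x).le)
    (fun x ↦ (Mx_pos x).le) (jap_rpow_mul_Mx_mul_le_rotation hγ0)
  simp only [hdiff, hgrad, Measure.volume_eq_prod, mul_comm (_ ^ 2) (Mx _),
    integral_Mx_mul_norm_sq, integral_sq_mul_sub_mul he.memLp_two hF.memLp_two] at hpoincare
  have hmean' : ∫ x, jap x ^ (γ / 2) * sqrtM x * (jap x ^ (γ / 2) * f x) = 0 := by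
    rw [← hmean]
    simp only [← jap_rpow_half_mul_self γ]
    congr! 2
    ring
  specialize hpoincare
    ((memLp_mul_prod he.memLp_two hF.memLp_two).sub
      (memLp_mul_prod hF.memLp_two he.memLp_two)).integrable_sq
    (integrable_finsetSum _ fun i _ ↦ integrable_jap_rpow_mul_sq γ (hf.maxwellDeriv i))
    (integrable_Mx_mul (by fun_prop))
  simp only [mul_pow, sq (jap _ ^ (γ / 2)), jap_rpow_half_mul_self, sq (sqrtM _),
    sqrtM_mul_self, hmean',
    integral_finsetSum _ fun i _ ↦ integrable_jap_rpow_mul_sq γ (hf.maxwellDeriv i)] at hpoincare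
  rw [weightedMass, gradientDissipation]
  linarith

end WeightedPoincare

section Dissipation

variable {γ : ℝ} {f g : E3 → ℝ}

theorem jap_rpow_pos (s : ℝ) (x : E3) : 0 < jap x ^ s := Real.rpow_pos_of_pos (jap_pos x) s

theorem pd_jap_rpow_mul (s : ℝ) (i : Fin 3) {x : E3} (hg : DifferentiableAt ℝ g x) :
    pd i (fun x ↦ jap x ^ s * g x) x =
      jap x ^ s * (s * (x i / (1 + ‖x‖ ^ 2)) * g x + pd i g x) := by
  rw [pd_mul i ((hasTemperateGrowth_jap_rpow s).1.differentiable (by simp) x) hg, pd_jap_rpow]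
  ring

theorem jap_rpow_mul_coord_mul_sq_le (hγ0 : γ ≤ 0) (hf : IsSchwartz f) (i : Fin 3) (x : E3) :
    jap x ^ γ * (x i * f x) ^ 2 ≤
      4 * (jap x ^ γ * maxwellDeriv i f x ^ 2) + 2 * (jap x ^ γ * f x ^ 2) -
        2 * (maxwellDeriv i f x * (jap x ^ γ * (x i * f x)) -
          f x * (x i / 2 * (jap x ^ γ * (x i * f x)) -
            pd i (fun x ↦ jap x ^ γ * (x i * f x)) x)) := by
  have hxf : IsSchwartz fun x ↦ x i * f x := hf.mul_left (by fun_prop)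
  have hdrift : γ * (jap x ^ γ * (x i * f x) ^ 2 / (1 + ‖x‖ ^ 2)) ≤ 0 :=
    mul_nonpos_of_nonpos_of_nonneg hγ0
      (div_nonneg (mul_nonneg (jap_rpow_pos γ x).le (sq_nonneg _)) (by positivity))
  have hyoung := mul_nonneg (jap_rpow_pos γ x).le (sq_nonneg (x i * f x - 2 * maxwellDeriv i f x))
  rw [pd_jap_rpow_mul γ i (hxf.differentiable x), pd_mul i (by fun_prop) (hf.differentiable x),
    pd_coord, if_pos rfl, show pd i f x = maxwellDeriv i f x - x i / 2 * f x by
      rw [maxwellDeriv]; ring]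
  linear_combination 2 * hdrift + hyoung

theorem integral_jap_rpow_mul_coord_mul_sq_le (hγ0 : γ ≤ 0) (hf : IsSchwartz f) (i : Fin 3) :
    ∫ x, jap x ^ γ * (x i * f x) ^ 2 ≤
      4 * (∫ x, jap x ^ γ * maxwellDeriv i f x ^ 2) + 2 * ∫ x, jap x ^ γ * f x ^ 2 := by
  have hxf : IsSchwartz fun x ↦ x i * f x := hf.mul_left (by fun_prop)
  have hv : IsSchwartz fun x ↦ jap x ^ γ * (x i * f x) := hxf.mul_left (by fun_prop)
  have hxv : IsSchwartz fun x ↦ x i / 2 * (jap x ^ γ * (x i * f x)) := hv.mul_left (by fun_prop)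
  have hA := (integrable_jap_rpow_mul_sq γ (hf.maxwellDeriv i)).const_mul 4
  have hf₂ := (integrable_jap_rpow_mul_sq γ hf).const_mul 2
  have hAv := ((hf.maxwellDeriv i).mul hv).integrable (μ := volume)
  have hfv := (hf.mul (hxv.sub (hv.pd i))).integrable (μ := volume)
  refine (integral_mono (integrable_jap_rpow_mul_sq γ hxf)
    ((hA.add hf₂).sub ((hAv.sub hfv).const_mul 2))
    (jap_rpow_mul_coord_mul_sq_le hγ0 hf i)).trans_eq ?_
  rw [integral_sub' (hA.add hf₂) ((hAv.sub hfv).const_mul 2), integral_add' hA hf₂,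
    integral_const_mul, integral_const_mul, integral_const_mul, integral_sub' hAv hfv,
    integral_maxwellDeriv_mul i hf hv, sub_self, mul_zero, sub_zero]

/-- The density `|Af|² + |ξ ∧ Af|² + ⟨ξ⟩² |f|²` of the full dissipation, before weighting. -/
noncomputable def dissipationDensity (f : E3 → ℝ) (x : E3) : ℝ :=
  ∑ i, maxwellDeriv i f x ^ 2 + wedgeSq x (fun i ↦ maxwellDeriv i f x) + (1 + ‖x‖ ^ 2) * f x ^ 2

/-- The full dissipation `∫ ⟨ξ⟩^γ (|Af|² + |ξ ∧ Af|² + ⟨ξ⟩² |f|²)`, the square of an anisotropic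
norm which controls `|·|_σ`. -/
noncomputable def dissipation (γ : ℝ) (f : E3 → ℝ) : ℝ :=
  ∫ x, jap x ^ γ * dissipationDensity f x

theorem dissipationDensity_nonneg (f : E3 → ℝ) (x : E3) : 0 ≤ dissipationDensity f x :=
  add_nonneg (add_nonneg (Finset.sum_nonneg fun _ _ ↦ sq_nonneg _) (wedgeSq_nonneg _ _))
    (by positivity)

theorem integrable_jap_rpow_mul_wedgeSq (γ : ℝ) (hf : IsSchwartz f) :
    Integrable fun x ↦ jap x ^ γ * wedgeSq x fun i ↦ maxwellDeriv i f x := by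
  have hterm (a b : Fin 3) : IsSchwartz fun x ↦
      x a * maxwellDeriv b f x - x b * maxwellDeriv a f x :=
    ((hf.maxwellDeriv b).mul_left (by fun_prop)).sub ((hf.maxwellDeriv a).mul_left (by fun_prop))
  simp only [wedgeSq_eq_sum]
  simp only [mul_left_comm _ (1 / 2 : ℝ), Finset.mul_sum]
  exact integrable_finsetSum _ fun a _ ↦ integrable_finsetSum _ fun b _ ↦
    (integrable_jap_rpow_mul_sq γ (hterm a b)).const_mul _

theorem jap_rpow_mul_dissipationDensity (γ : ℝ) (f : E3 → ℝ) (x : E3) :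
    jap x ^ γ * dissipationDensity f x =
      ∑ i, jap x ^ γ * maxwellDeriv i f x ^ 2 +
        jap x ^ γ * wedgeSq x (fun i ↦ maxwellDeriv i f x) +
        (jap x ^ γ * f x ^ 2 + ∑ i, jap x ^ γ * (x i * f x) ^ 2) := by
  simp only [dissipationDensity, EuclideanSpace.real_norm_sq_eq, mul_pow, ← Finset.mul_sum,
    ← Finset.sum_mul]
  ring

theorem integrable_gradient_add_angular (γ : ℝ) (hf : IsSchwartz f) :
    Integrable fun x ↦ ∑ i, jap x ^ γ * maxwellDeriv i f x ^ 2 +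
      jap x ^ γ * wedgeSq x (fun i ↦ maxwellDeriv i f x) :=
  (integrable_finsetSum _ fun i _ ↦ integrable_jap_rpow_mul_sq γ (hf.maxwellDeriv i)).add
    (integrable_jap_rpow_mul_wedgeSq γ hf)

theorem integrable_mass_add_moment (γ : ℝ) (hf : IsSchwartz f) :
    Integrable fun x ↦ jap x ^ γ * f x ^ 2 + ∑ i, jap x ^ γ * (x i * f x) ^ 2 := by
  have hx (i : Fin 3) : IsSchwartz fun x ↦ x i * f x := hf.mul_left (by fun_prop)
  exact (integrable_jap_rpow_mul_sq γ hf).add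
    (integrable_finsetSum _ fun i _ ↦ integrable_jap_rpow_mul_sq γ (hx i))

theorem integrable_jap_rpow_mul_dissipationDensity (γ : ℝ) (hf : IsSchwartz f) :
    Integrable fun x ↦ jap x ^ γ * dissipationDensity f x := by
  simp only [jap_rpow_mul_dissipationDensity]
  exact (integrable_gradient_add_angular γ hf).add (integrable_mass_add_moment γ hf)

theorem dissipation_eq (γ : ℝ) (hf : IsSchwartz f) :
    dissipation γ f = gradientDissipation γ f + angularDissipation γ f +
      ((∫ x, jap x ^ γ * f x ^ 2) + ∑ i, ∫ x, jap x ^ γ * (x i * f x) ^ 2) := by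
  have hx (i : Fin 3) : IsSchwartz fun x ↦ x i * f x := hf.mul_left (by fun_prop)
  have hA := fun i ↦ integrable_jap_rpow_mul_sq γ (hf.maxwellDeriv i)
  have hxf := fun i ↦ integrable_jap_rpow_mul_sq γ (hx i)
  simp only [dissipation, jap_rpow_mul_dissipationDensity]
  rw [integral_add (integrable_gradient_add_angular γ hf) (integrable_mass_add_moment γ hf),
    integral_add (integrable_finsetSum _ fun i _ ↦ hA i) (integrable_jap_rpow_mul_wedgeSq γ hf),
    integral_add (integrable_jap_rpow_mul_sq γ hf) (integrable_finsetSum _ fun i _ ↦ hxf i),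
    integral_finsetSum _ fun i _ ↦ hA i, integral_finsetSum _ fun i _ ↦ hxf i,
    gradientDissipation, angularDissipation]

theorem dissipation_le (hγ0 : γ ≤ 0) (hf : IsSchwartz f) :
    dissipation γ f ≤ 5 * gradientDissipation γ f + angularDissipation γ f +
      7 * ∫ x, jap x ^ γ * f x ^ 2 := by
  have hmoment := Finset.sum_le_sum fun i (_ : i ∈ Finset.univ) ↦
    integral_jap_rpow_mul_coord_mul_sq_le hγ0 hf i
  rw [Finset.sum_add_distrib, ← Finset.mul_sum, Finset.sum_const, Finset.card_univ,
    Fintype.card_fin, nsmul_eq_mul, ← gradientDissipation] at hmoment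
  rw [dissipation_eq γ hf]
  push_cast at hmoment
  linarith

theorem weightedMass_pos (γ : ℝ) : 0 < weightedMass γ := by
  have hM : IsSchwartz fun x ↦ jap x ^ γ * Mx x := isSchwartz_Mx.mul_left (by fun_prop)
  have hpos (x : E3) : 0 < jap x ^ γ * Mx x := mul_pos (jap_rpow_pos γ x) (Mx_pos x)
  exact integral_pos_of_integrable_nonneg_nonzero hM.continuous hM.integrable
    (fun x ↦ (hpos x).le) (hpos 0).ne'

theorem weightedMoment_pos (γ : ℝ) : 0 < weightedMoment γ := by
  have hM : IsSchwartz fun x ↦ jap x ^ γ * Mx x := isSchwartz_Mx.mul_left (by fun_prop)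
  have hM₂ : IsSchwartz fun x ↦ jap x ^ γ * Mx x * x 0 ^ 2 := hM.mul_right (by fun_prop)
  have hpos (x : E3) : 0 < jap x ^ γ * Mx x := mul_pos (jap_rpow_pos γ x) (Mx_pos x)
  refine integral_pos_of_integrable_nonneg_nonzero (x := EuclideanSpace.single 0 1) hM₂.continuous
    hM₂.integrable (fun x ↦ mul_nonneg (hpos x).le (sq_nonneg _)) ?_
  simpa using (hpos _).ne'

theorem exists_mul_dissipation_le_landauDirichlet (hγ : -5 < γ) (hγ0 : γ ≤ 0) :
    ∃ κ > 0, ∀ f, IsSchwartz f → ∫ x, jap x ^ γ * sqrtM x * f x = 0 →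
      (∀ i, ∫ x, jap x ^ γ * sqrtM x * maxwellDeriv i f x = 0) →
      ∑ i, ∫ x, jap x ^ γ * sqrtM x * x i * maxwellDeriv i f x = 0 →
      κ * dissipation γ f ≤ landauDirichlet γ f f := by
  have hmass := weightedMass_pos γ
  have hmoment := weightedMoment_pos γ
  set K := max (1 / weightedMass γ)
    ((5 + 7 * (3 * π ^ 2 / 8 / weightedMass γ)) / (2 * weightedMoment γ))
  have hK : 0 < K := lt_max_of_lt_left (by positivity)
  have hmassK : 1 ≤ K * weightedMass γ := (div_le_iff₀ hmass).1 (le_max_left _ _)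
  have hmomentK : 5 + 7 * (3 * π ^ 2 / 8 / weightedMass γ) ≤ K * (2 * weightedMoment γ) :=
    (div_le_iff₀ (by positivity)).1 (le_max_right _ _)
  refine ⟨2 ^ (γ / 2) / K, by positivity, fun f hf hmean₀ hmean₁ htrace ↦ ?_⟩
  have hpoincare := weightedMass_mul_integral_sq_le hγ0 hf hmean₀
  rw [← le_div_iff₀' hmass, mul_div_right_comm] at hpoincare
  have hgradient : 0 ≤ gradientDissipation γ f := Finset.sum_nonneg fun i _ ↦
    integral_nonneg fun x ↦ mul_nonneg (jap_rpow_pos γ x).le (sq_nonneg _)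
  have hangular : 0 ≤ angularDissipation γ f :=
    integral_nonneg fun x ↦ mul_nonneg (jap_rpow_pos γ x).le (wedgeSq_nonneg _ _)
  have hN : dissipation γ f ≤ K * (weightedMass γ * angularDissipation γ f +
      2 * weightedMoment γ * gradientDissipation γ f) := by
    linarith [dissipation_le hγ0 hf, mul_le_mul_of_nonneg_right hmassK hangular,
      mul_le_mul_of_nonneg_right hmomentK hgradient]
  calc 2 ^ (γ / 2) / K * dissipation γ f
      ≤ 2 ^ (γ / 2) / K * (K * (weightedMass γ * angularDissipation γ f +
          2 * weightedMoment γ * gradientDissipation γ f)) := by gcongr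
    _ = 2 ^ (γ / 2) * (weightedMass γ * angularDissipation γ f +
          2 * weightedMoment γ * gradientDissipation γ f) := by
        rw [← mul_assoc, div_mul_cancel₀ _ hK.ne']
    _ ≤ landauDirichlet γ f f :=
        rpow_mul_dissipation_le_landauDirichlet hγ hγ0 hf hmean₁ htrace

end Dissipation

section Reduction

variable {γ : ℝ} (a : ℝ) (b : Fin 3 → ℝ) (c : ℝ)

theorem integrable_jap_rpow_mul_Mx (γ : ℝ) : Integrable fun x ↦ jap x ^ γ * Mx x :=
  (isSchwartz_Mx.mul_left (hasTemperateGrowth_jap_rpow γ)).integrable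

theorem integrable_jap_rpow_mul_Mx_mul (γ : ℝ) {p : E3 → ℝ} (hp : p.HasTemperateGrowth) :
    Integrable fun x ↦ jap x ^ γ * Mx x * p x :=
  ((isSchwartz_Mx.mul_left (hasTemperateGrowth_jap_rpow γ)).mul_right hp).integrable

theorem integral_jap_rpow_mul_sqrtM_mul_hydrodynamic (γ : ℝ) :
    ∫ x, jap x ^ γ * sqrtM x * hydrodynamic a b c x =
      a * weightedMass γ + ∫ x, jap x ^ γ * sqrtM x * hydrodynamic 0 b c x := by
  have hW (a : ℝ) := integrable_jap_rpow_mul_Mx_mul γ (hasTemperateGrowth_hydrodynamic_poly a b c)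
  have hhydrodynamic (a : ℝ) (x : E3) : jap x ^ γ * sqrtM x * hydrodynamic a b c x =
      jap x ^ γ * Mx x * (a + (∑ i, b i * x i) + c * ‖x‖ ^ 2) := by
    rw [hydrodynamic, ← sqrtM_mul_self]
    ring
  simp only [hhydrodynamic, weightedMass]
  rw [← integral_const_mul, ← integral_add ((integrable_jap_rpow_mul_Mx γ).const_mul a) (hW 0)]
  congr! 2
  ring

theorem integral_jap_rpow_mul_sqrtM_mul_maxwellDeriv_hydrodynamic (γ : ℝ) (i : Fin 3) :
    ∫ x, jap x ^ γ * sqrtM x * maxwellDeriv i (hydrodynamic a b c) x = b i * weightedMass γ := by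
  have hhydrodynamic (x : E3) : jap x ^ γ * sqrtM x * maxwellDeriv i (hydrodynamic a b c) x =
      b i * (jap x ^ γ * Mx x) + 2 * c * (jap x ^ γ * Mx x * x i) := by
    rw [maxwellDeriv_hydrodynamic, ← sqrtM_mul_self]
    ring
  simp only [hhydrodynamic]
  rw [integral_add ((integrable_jap_rpow_mul_Mx γ).const_mul _)
    ((integrable_jap_rpow_mul_Mx_mul γ (hasTemperateGrowth_coord i)).const_mul _),
    integral_const_mul, integral_const_mul, integral_jap_rpow_mul_Mx_mul_coord, mul_zero, add_zero,
    weightedMass]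

theorem integral_jap_rpow_mul_sqrtM_mul_coord_mul_maxwellDeriv_hydrodynamic (γ : ℝ) (i : Fin 3) :
    ∫ x, jap x ^ γ * sqrtM x * x i * maxwellDeriv i (hydrodynamic a b c) x =
      2 * c * weightedMoment γ := by
  have hhydrodynamic (x : E3) : jap x ^ γ * sqrtM x * x i * maxwellDeriv i (hydrodynamic a b c) x =
      b i * (jap x ^ γ * Mx x * x i) + 2 * c * (jap x ^ γ * Mx x * (x i * x i)) := by
    rw [maxwellDeriv_hydrodynamic, ← sqrtM_mul_self]
    ring
  simp only [hhydrodynamic]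
  rw [integral_add ((integrable_jap_rpow_mul_Mx_mul γ (hasTemperateGrowth_coord i)).const_mul _)
    ((integrable_jap_rpow_mul_Mx_mul γ (by fun_prop)).const_mul _), integral_const_mul,
    integral_const_mul, integral_jap_rpow_mul_Mx_mul_coord,
    integral_jap_rpow_mul_Mx_mul_coord_mul_coord, mul_zero, zero_add, if_pos rfl]

theorem exists_hydrodynamic_mul_dissipation_sub_le (hγ : -5 < γ) (hγ0 : γ ≤ 0) :
    ∃ κ > 0, ∀ u, IsSchwartz u → ∃ a b c,
      κ * dissipation γ (fun x ↦ u x - hydrodynamic a b c x) ≤ landauDirichlet γ u u := by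
  obtain ⟨κ, hκ, hcoercive⟩ := exists_mul_dissipation_le_landauDirichlet hγ hγ0
  have hmass := (weightedMass_pos γ).ne'
  have hmoment := (weightedMoment_pos γ).ne'
  refine ⟨κ, hκ, fun u hu ↦ ?_⟩
  let c := (∑ i, ∫ x, jap x ^ γ * sqrtM x * x i * maxwellDeriv i u x) / (6 * weightedMoment γ)
  let b (i : Fin 3) := (∫ x, jap x ^ γ * sqrtM x * maxwellDeriv i u x) / weightedMass γ
  let a := ((∫ x, jap x ^ γ * sqrtM x * u x) -
    ∫ x, jap x ^ γ * sqrtM x * hydrodynamic 0 b c x) / weightedMass γ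
  have hk := isSchwartz_hydrodynamic a b c
  have hint {q f : E3 → ℝ} (hq : q.HasTemperateGrowth) (hf : IsSchwartz f) :
      Integrable fun x ↦ q x * f x := (hf.mul_left hq).integrable
  have hsqrtM := isSchwartz_sqrtM.hasTemperateGrowth
  have hweight : (fun x ↦ jap x ^ γ * sqrtM x).HasTemperateGrowth := by fun_prop
  have hweight_coord (i : Fin 3) :
      (fun x ↦ jap x ^ γ * sqrtM x * x i).HasTemperateGrowth := by fun_prop
  refine ⟨a, b, c, ?_⟩
  rw [← landauDirichlet_sub_hydrodynamic a b c γ hu.differentiable]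
  refine hcoercive _ (hu.sub hk) ?_ (fun i ↦ ?_) ?_
  · simp only [mul_sub]
    rw [integral_sub (hint hweight hu) (hint hweight hk),
      integral_jap_rpow_mul_sqrtM_mul_hydrodynamic, div_mul_cancel₀ _ hmass]
    ring
  · simp only [maxwellDeriv_sub i hu.differentiable hk.differentiable, mul_sub]
    rw [integral_sub (hint hweight (hu.maxwellDeriv i)) (hint hweight (hk.maxwellDeriv i)),
      integral_jap_rpow_mul_sqrtM_mul_maxwellDeriv_hydrodynamic, div_mul_cancel₀ _ hmass, sub_self]
  · simp only [maxwellDeriv_sub _ hu.differentiable hk.differentiable, mul_sub,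
      integral_sub (hint (hweight_coord _) (hu.maxwellDeriv _))
        (hint (hweight_coord _) (hk.maxwellDeriv _)), Finset.sum_sub_distrib,
      integral_jap_rpow_mul_sqrtM_mul_coord_mul_maxwellDeriv_hydrodynamic]
    simp only [c, Finset.sum_const, Finset.card_univ, Fintype.card_fin, nsmul_eq_mul]
    field_simp
    ring

end Reduction

section SigmaNorm

variable {γ : ℝ} {f : E3 → ℝ}

theorem jap_le_two_mul_jap_mul_max (x y : E3) : jap x ≤ 2 * jap y * max 1 ‖x - y‖ := by
  have hmax : 1 ≤ max 1 ‖x - y‖ := le_max_left _ _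
  have hnorm : ‖x‖ ≤ ‖y‖ + max 1 ‖x - y‖ :=
    (norm_le_norm_add_norm_sub' x y).trans (by gcongr; exact le_max_right _ _)
  have hy : jap y ^ 2 = 1 + ‖y‖ ^ 2 := Real.sq_sqrt (by positivity)
  refine Real.sqrt_le_iff.2 ⟨by positivity [jap_pos y], ?_⟩
  rw [mul_pow, mul_pow, hy]
  nlinarith [norm_nonneg x, norm_nonneg y, sq_nonneg (‖y‖ - max 1 ‖x - y‖),
    mul_nonneg (sq_nonneg ‖y‖) (sub_nonneg.2 hmax), sq_nonneg (‖y‖ * max 1 ‖x - y‖)]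

theorem max_one_norm_sub_rpow_le (hγ0 : γ ≤ 0) (x y : E3) :
    max 1 ‖x - y‖ ^ γ ≤ 2 ^ (-γ) * jap y ^ (-γ) * jap x ^ γ := by
  have hmax : 0 < max 1 ‖x - y‖ := lt_max_of_lt_left one_pos
  have hy := jap_pos y
  have hpeetre := Real.rpow_le_rpow_of_nonpos (jap_pos x) (jap_le_two_mul_jap_mul_max x y) hγ0
  rw [Real.mul_rpow (by positivity) hmax.le, Real.mul_rpow zero_le_two hy.le] at hpeetre
  rw [Real.rpow_neg zero_le_two, Real.rpow_neg hy.le, ← mul_inv, ← div_eq_inv_mul,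
    le_div_iff₀' (by positivity)]
  exact hpeetre

theorem landauForm_self_le (γ : ℝ) (z : E3) (w : Fin 3 → ℝ) :
    landauForm γ z w w ≤ ‖z‖ ^ (γ + 2) * ∑ i, w i ^ 2 := by
  rcases eq_or_ne z 0 with rfl | hz
  · rw [landauForm_zero_self, norm_zero]
  · rw [landauForm_self hz, Real.rpow_add (norm_pos_iff.2 hz), Real.rpow_two, mul_assoc]
    exact mul_le_mul_of_nonneg_left (wedgeSq_le z w) (by positivity)

theorem wedgeSq_sub_le (x y : E3) (w : Fin 3 → ℝ) :
    wedgeSq (x - y) w ≤ 2 * (1 + ‖y‖ ^ 2) * (∑ i, w i ^ 2 + wedgeSq x w) := by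
  have hparallelogram : wedgeSq (x - y) w ≤ 2 * wedgeSq x w + 2 * wedgeSq y w := by
    have hsum : wedgeSq (x - y) w + wedgeSq (x + y) w = 2 * wedgeSq x w + 2 * wedgeSq y w := by
      simp only [wedgeSq_eq_sum, PiLp.sub_apply, PiLp.add_apply, Fin.sum_univ_three]
      ring
    linarith [wedgeSq_nonneg (x + y) w]
  nlinarith [wedgeSq_le y w, mul_nonneg (sq_nonneg ‖y‖) (wedgeSq_nonneg x w),
    Finset.sum_nonneg fun i (_ : i ∈ Finset.univ) ↦ sq_nonneg (w i)]

theorem landauForm_sub_self_le (hγ0 : γ ≤ 0) (x y : E3) (w : Fin 3 → ℝ) :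
    landauForm γ (x - y) w w ≤
      2 ^ (-γ) * jap y ^ (-γ) * jap x ^ γ * (2 * (1 + ‖y‖ ^ 2) +
        (Metric.ball 0 1).indicator (fun z ↦ ‖z‖ ^ (γ + 2)) (x - y)) *
          (∑ i, w i ^ 2 + wedgeSq x w) := by
  have hwedge := wedgeSq_nonneg x w
  have hsum := Finset.sum_nonneg fun i (_ : i ∈ Finset.univ) ↦ sq_nonneg (w i)
  have hpeetre := max_one_norm_sub_rpow_le hγ0 x y
  by_cases hz : x - y ∈ Metric.ball 0 1
  · have hmax : max 1 ‖x - y‖ = 1 := max_eq_left (mem_ball_zero_iff.1 hz).le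
    rw [hmax, Real.one_rpow] at hpeetre
    rw [Set.indicator_of_mem hz]
    refine (landauForm_self_le γ (x - y) w).trans
      (mul_le_mul ?_ (le_add_of_nonneg_right hwedge) hsum (by positivity [jap_pos x, jap_pos y]))
    have := le_mul_of_one_le_left (Real.rpow_nonneg (norm_nonneg (x - y)) (γ + 2)) hpeetre
    refine this.trans (mul_le_mul_of_nonneg_left ?_ (zero_le_one.trans hpeetre))
    exact le_add_of_nonneg_left (by positivity)
  · have hnorm : 1 ≤ ‖x - y‖ := by simpa using hz
    rw [max_eq_right hnorm] at hpeetre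
    rw [Set.indicator_of_notMem hz, add_zero, landauForm_self (norm_pos_iff.1 (by linarith)),
      mul_assoc _ (2 * _)]
    exact mul_le_mul hpeetre (wedgeSq_sub_le x y w) (wedgeSq_nonneg _ _)
      ((Real.rpow_nonneg (norm_nonneg _) _).trans hpeetre)

theorem sum_sigmaij_mul_mul (hγ : -5 < γ) (x : E3) (w : Fin 3 → ℝ) :
    ∑ i, ∑ j, sigmaij γ i j x * w i * w j = ∫ y, landauForm γ (x - y) w w * Mx y := by
  have hint (i j : Fin 3) : Integrable fun y ↦ Bij γ i j (x - y) * Mx y * (w i * w j) :=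
    (integrable_Bij_mul i j hγ isSchwartz_Mx x).mul_const _
  have hform (y : E3) : landauForm γ (x - y) w w * Mx y =
      ∑ i, ∑ j, Bij γ i j (x - y) * Mx y * (w i * w j) := by
    simp only [landauForm, Finset.sum_mul]
    exact Finset.sum_congr rfl fun i _ ↦ Finset.sum_congr rfl fun j _ ↦ by ring
  simp only [hform]
  rw [integral_finsetSum _ fun i _ ↦ integrable_finsetSum _ fun j _ ↦ hint i j]
  simp only [integral_finsetSum _ fun j _ ↦ hint _ j, integral_mul_const]
  simp only [sigmaij, mul_assoc]

theorem exists_integral_landauForm_bound_le (hγ : -5 < γ) :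
    ∃ C, 0 ≤ C ∧ ∀ x, Integrable (fun y ↦ 2 ^ (-γ) * jap y ^ (-γ) * Mx y * (2 * (1 + ‖y‖ ^ 2) +
        (Metric.ball 0 1).indicator (fun z : E3 ↦ ‖z‖ ^ (γ + 2)) (x - y))) ∧
      ∫ y, 2 ^ (-γ) * jap y ^ (-γ) * Mx y * (2 * (1 + ‖y‖ ^ 2) +
        (Metric.ball 0 1).indicator (fun z : E3 ↦ ‖z‖ ^ (γ + 2)) (x - y)) ≤ C := by
  have hg : IsSchwartz fun y : E3 ↦ 2 ^ (-γ) * jap y ^ (-γ) * Mx y :=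
    isSchwartz_Mx.mul_left (by fun_prop)
  have hg₂ : IsSchwartz fun y : E3 ↦ 2 ^ (-γ) * jap y ^ (-γ) * Mx y * (2 * (1 + ‖y‖ ^ 2)) :=
    hg.mul_right (by fun_prop)
  obtain ⟨G, hG, hgG⟩ := hg.exists_norm_le_div_pow 0
  simp only [pow_zero, div_one] at hgG
  have hball : Integrable ((Metric.ball (0 : E3) 1).indicator fun z ↦ ‖z‖ ^ (γ + 2)) :=
    (integrableOn_ball_norm_rpow (by simp) (by simp; linarith)).integrable_indicator
      measurableSet_ball
  set h := (Metric.ball (0 : E3) 1).indicator fun z ↦ ‖z‖ ^ (γ + 2)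
  have hh (z : E3) : 0 ≤ h z := Set.indicator_nonneg (fun z _ ↦ by positivity) z
  have hprod (x : E3) : Integrable fun y ↦ 2 ^ (-γ) * jap y ^ (-γ) * Mx y * h (x - y) :=
    (hball.comp_sub_left x).bdd_mul hg.continuous.aestronglyMeasurable (.of_forall hgG)
  simp only [fun y : E3 ↦ mul_add (2 ^ (-γ) * jap y ^ (-γ) * Mx y) (2 * (1 + ‖y‖ ^ 2))]
  have hpos (y : E3) : 0 ≤ 2 ^ (-γ) * jap y ^ (-γ) * Mx y * (2 * (1 + ‖y‖ ^ 2)) := by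
    positivity [jap_pos y, Mx_pos y]
  refine ⟨_, add_nonneg (integral_nonneg (μ := volume) hpos)
    (mul_nonneg hG (integral_nonneg (μ := volume) hh)), fun x ↦
    ⟨hg₂.integrable.add (hprod x), ?_⟩⟩
  rw [integral_add hg₂.integrable (hprod x), ← integral_sub_left_eq_self h volume x,
    ← integral_const_mul G]
  gcongr
  · exact hprod x
  · exact (hball.comp_sub_left x).const_mul G
  · exact fun y ↦ mul_le_mul_of_nonneg_right ((le_abs_self _).trans (hgG y)) (hh _)

theorem exists_sum_sigmaij_mul_mul_le (hγ : -5 < γ) (hγ0 : γ ≤ 0) :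
    ∃ C, 0 ≤ C ∧ ∀ (x : E3) (w : Fin 3 → ℝ), ∑ i, ∑ j, sigmaij γ i j x * w i * w j ≤
      C * (jap x ^ γ * (∑ i, w i ^ 2 + wedgeSq x w)) := by
  obtain ⟨C, hC, hbound⟩ := exists_integral_landauForm_bound_le hγ
  refine ⟨C, hC, fun x w ↦ ?_⟩
  have hq : 0 ≤ jap x ^ γ * (∑ i, w i ^ 2 + wedgeSq x w) := mul_nonneg (jap_rpow_pos γ x).le
    (add_nonneg (Finset.sum_nonneg fun i _ ↦ sq_nonneg _) (wedgeSq_nonneg x w))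
  refine le_trans ?_ (mul_le_mul_of_nonneg_right (hbound x).2 hq)
  rw [sum_sigmaij_mul_mul hγ, ← integral_mul_const]
  refine integral_mono_of_nonneg
    (.of_forall fun y ↦ mul_nonneg (landauForm_self_nonneg γ _ w) (Mx_pos y).le)
    ((hbound x).1.mul_const _) (.of_forall fun y ↦ ?_)
  exact (mul_le_mul_of_nonneg_right (landauForm_sub_self_le hγ0 x y w) (Mx_pos y).le).trans_eq
    (by ring)

theorem hasTemperateGrowth_sigmaij (hγ : -5 < γ) (i j : Fin 3) :
    (sigmaij γ i j).HasTemperateGrowth := by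
  have hconv := (isTemperedKernel_Bij i j hγ).hasTemperateGrowth_convolution isSchwartz_Mx
  rwa [funext (Bij_convolution_apply i j γ Mx)] at hconv

theorem vsigSq_eq (hγ : -5 < γ) (hf : IsSchwartz f) :
    vsigSq γ 0 0 1 0 f = ∫ x, (∑ i, ∑ j, sigmaij γ i j x * pd i f x * pd j f x +
      ∑ i, ∑ j, sigmaij γ i j x * (x i / 2 * f x) * (x j / 2 * f x)) := by
  have hσ (i j : Fin 3) := hasTemperateGrowth_sigmaij hγ i j
  have hint (i j : Fin 3) : Integrable fun x ↦ sigmaij γ i j x * pd i f x * pd j f x +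
      sigmaij γ i j x * (x i / 2) * (x j / 2) * f x ^ 2 := by
    have hgrad : IsSchwartz fun x ↦ sigmaij γ i j x * pd i f x * pd j f x :=
      ((hf.pd i).mul_left (hσ i j)).mul (hf.pd j)
    have hσx : (fun x ↦ sigmaij γ i j x * (x i / 2) * (x j / 2)).HasTemperateGrowth := by
      have := hσ i j
      fun_prop
    have hmult : IsSchwartz fun x ↦ sigmaij γ i j x * (x i / 2) * (x j / 2) * f x ^ 2 := by
      simpa only [sq] using (hf.mul hf).mul_left hσx
    exact hgrad.integrable.add hmult.integrable
  simp only [vsigSq, wt, zero_mul, mul_zero, Real.rpow_zero, zero_div, Real.exp_zero, one_pow,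
    one_mul, mul_one, ← integral_finsetSum Finset.univ fun j _ ↦ hint _ j]
  rw [← integral_finsetSum _ fun i _ ↦ integrable_finsetSum _ fun j _ ↦ hint i j]
  simp only [← Finset.sum_add_distrib]
  exact congrArg _ <| funext fun x ↦ Finset.sum_congr rfl fun i _ ↦
    Finset.sum_congr rfl fun j _ ↦ by ring

theorem pd_add_multiplication_le_dissipationDensity (f : E3 → ℝ) (x : E3) :
    ∑ i, pd i f x ^ 2 + wedgeSq x (fun i ↦ pd i f x) +
      (∑ i, (x i / 2 * f x) ^ 2 + wedgeSq x (fun i ↦ x i / 2 * f x)) ≤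
        2 * dissipationDensity f x := by
  have hpd (i : Fin 3) : pd i f x = maxwellDeriv i f x - x i / 2 * f x := by
    rw [maxwellDeriv, add_sub_cancel_right]
  have hwedge_pd : wedgeSq x (fun i ↦ pd i f x) = wedgeSq x (fun i ↦ maxwellDeriv i f x) := by
    simp only [wedgeSq_eq_sum, hpd]
    congr! 4
    ring
  have hwedge_coord : wedgeSq x (fun i ↦ x i / 2 * f x) = 0 := by
    simp only [wedgeSq_eq_sum, Fin.sum_univ_three]
    ring
  have hcoord : ∑ i, (x i / 2 * f x) ^ 2 = ‖x‖ ^ 2 * f x ^ 2 / 4 := by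
    rw [EuclideanSpace.real_norm_sq_eq, Finset.sum_mul, Finset.sum_div]
    exact Finset.sum_congr rfl fun i _ ↦ by ring
  have hpd_sq : ∑ i, pd i f x ^ 2 ≤
      2 * ∑ i, maxwellDeriv i f x ^ 2 + 2 * ∑ i, (x i / 2 * f x) ^ 2 := by
    rw [Finset.mul_sum, Finset.mul_sum, ← Finset.sum_add_distrib]
    exact Finset.sum_le_sum fun i _ ↦ by
      rw [hpd]
      linarith [sq_nonneg (maxwellDeriv i f x + x i / 2 * f x)]
  have hangular := wedgeSq_nonneg x fun i ↦ maxwellDeriv i f x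
  rw [hwedge_pd, hwedge_coord, dissipationDensity]
  linarith [mul_nonneg (sq_nonneg ‖x‖) (sq_nonneg (f x)), sq_nonneg (f x)]

theorem exists_vsigSq_le_mul_dissipation (hγ : -5 < γ) (hγ0 : γ ≤ 0) :
    ∃ C, 0 ≤ C ∧ ∀ f, IsSchwartz f → vsigSq γ 0 0 1 0 f ≤ C * dissipation γ f := by
  obtain ⟨C, hC, hσ⟩ := exists_sum_sigmaij_mul_mul_le hγ hγ0
  refine ⟨C * 2, by positivity, fun f hf ↦ ?_⟩
  have hpointwise (x : E3) : ∑ i, ∑ j, sigmaij γ i j x * pd i f x * pd j f x +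
      ∑ i, ∑ j, sigmaij γ i j x * (x i / 2 * f x) * (x j / 2 * f x) ≤
        C * 2 * (jap x ^ γ * dissipationDensity f x) :=
    calc _ ≤ C * (jap x ^ γ * (∑ i, pd i f x ^ 2 + wedgeSq x (fun i ↦ pd i f x))) +
          C * (jap x ^ γ * (∑ i, (x i / 2 * f x) ^ 2 + wedgeSq x (fun i ↦ x i / 2 * f x))) :=
        add_le_add (hσ x _) (hσ x _)
      _ = C * (jap x ^ γ * (∑ i, pd i f x ^ 2 + wedgeSq x (fun i ↦ pd i f x) +
          (∑ i, (x i / 2 * f x) ^ 2 + wedgeSq x (fun i ↦ x i / 2 * f x)))) := by ring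
      _ ≤ C * (jap x ^ γ * (2 * dissipationDensity f x)) := by
        gcongr
        · exact (jap_rpow_pos γ x).le
        · exact pd_add_multiplication_le_dissipationDensity f x
      _ = _ := by ring
  rw [vsigSq_eq hγ hf, dissipation, ← integral_const_mul]
  refine integral_mono_of_nonneg (.of_forall fun x ↦ ?_)
    ((integrable_jap_rpow_mul_dissipationDensity γ hf).const_mul _) (.of_forall hpointwise)
  simp only [sum_sigmaij_mul_mul hγ]
  exact add_nonneg
    (integral_nonneg fun y ↦ mul_nonneg (landauForm_self_nonneg γ _ _) (Mx_pos y).le)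
    (integral_nonneg fun y ↦ mul_nonneg (landauForm_self_nonneg γ _ _) (Mx_pos y).le)

end SigmaNorm

section DissipationNorm

variable {f g : E3 → ℝ}

theorem sq_le_dissipationDensity (f : E3 → ℝ) (x : E3) : f x ^ 2 ≤ dissipationDensity f x := by
  have hgrad : 0 ≤ ∑ i, maxwellDeriv i f x ^ 2 := Finset.sum_nonneg fun i _ ↦ sq_nonneg _
  have hangular := wedgeSq_nonneg x fun i ↦ maxwellDeriv i f x
  rw [dissipationDensity]
  linarith [mul_nonneg (sq_nonneg ‖x‖) (sq_nonneg (f x))]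

theorem integral_jap_rpow_mul_sq_le_dissipation (γ : ℝ) (hf : IsSchwartz f) :
    ∫ x, jap x ^ γ * f x ^ 2 ≤ dissipation γ f :=
  integral_mono (integrable_jap_rpow_mul_sq γ hf)
    (integrable_jap_rpow_mul_dissipationDensity γ hf) fun x ↦
      mul_le_mul_of_nonneg_left (sq_le_dissipationDensity f x) (jap_rpow_pos γ x).le

theorem dissipation_nonneg (γ : ℝ) (f : E3 → ℝ) : 0 ≤ dissipation γ f :=
  integral_nonneg fun x ↦ mul_nonneg (jap_rpow_pos γ x).le (dissipationDensity_nonneg f x)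

theorem eq_zero_of_dissipation_nonpos {γ : ℝ} (hf : IsSchwartz f) (h : dissipation γ f ≤ 0) :
    f = 0 := by
  have hnonneg (x : E3) : 0 ≤ jap x ^ γ * f x ^ 2 :=
    mul_nonneg (jap_rpow_pos γ x).le (sq_nonneg _)
  have hzero : ∫ x, jap x ^ γ * f x ^ 2 = 0 :=
    ((integral_jap_rpow_mul_sq_le_dissipation γ hf).trans h).antisymm (integral_nonneg hnonneg)
  rw [integral_eq_zero_iff_of_nonneg hnonneg (integrable_jap_rpow_mul_sq γ hf)] at hzero
  refine Measure.eq_of_ae_eq (μ := volume) (hzero.mono fun x hx ↦ ?_) hf.continuous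
    continuous_zero
  simpa [(jap_rpow_pos γ x).ne'] using hx

theorem dissipationDensity_sub_le (hf : Differentiable ℝ f) (hg : Differentiable ℝ g) (x : E3) :
    dissipationDensity (fun y ↦ f y - g y) x ≤
      2 * dissipationDensity f x + 2 * dissipationDensity g x := by
  have hsq (s t : ℝ) : (s - t) ^ 2 ≤ 2 * s ^ 2 + 2 * t ^ 2 := by linarith [sq_nonneg (s + t)]
  have hgrad : ∑ i, (maxwellDeriv i f x - maxwellDeriv i g x) ^ 2 ≤
      2 * ∑ i, maxwellDeriv i f x ^ 2 + 2 * ∑ i, maxwellDeriv i g x ^ 2 := by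
    simp only [Finset.mul_sum, ← Finset.sum_add_distrib]
    exact Finset.sum_le_sum fun i _ ↦ hsq _ _
  have hangular : wedgeSq x (fun i ↦ maxwellDeriv i f x - maxwellDeriv i g x) ≤
      2 * wedgeSq x (fun i ↦ maxwellDeriv i f x) + 2 * wedgeSq x (fun i ↦ maxwellDeriv i g x) := by
    simp only [wedgeSq_eq_sum, Finset.mul_sum, ← Finset.sum_add_distrib]
    exact Finset.sum_le_sum fun i _ ↦ Finset.sum_le_sum fun j _ ↦ by
      linarith [hsq (x i * maxwellDeriv j f x - x j * maxwellDeriv i f x)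
        (x i * maxwellDeriv j g x - x j * maxwellDeriv i g x)]
  simp only [dissipationDensity, maxwellDeriv_sub _ hf hg]
  linarith [mul_le_mul_of_nonneg_left (hsq (f x) (g x)) (by positivity : 0 ≤ 1 + ‖x‖ ^ 2)]

theorem dissipation_sub_le (γ : ℝ) (hf : IsSchwartz f) (hg : IsSchwartz g) :
    dissipation γ (fun x ↦ f x - g x) ≤ 2 * dissipation γ f + 2 * dissipation γ g := by
  have hf' := (integrable_jap_rpow_mul_dissipationDensity γ hf).const_mul 2
  have hg' := (integrable_jap_rpow_mul_dissipationDensity γ hg).const_mul 2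
  simp only [dissipation]
  rw [← integral_const_mul, ← integral_const_mul, ← integral_add hf' hg']
  refine integral_mono (integrable_jap_rpow_mul_dissipationDensity γ (hf.sub hg))
    (hf'.add hg') fun x ↦ ?_
  linarith [mul_le_mul_of_nonneg_left
    (dissipationDensity_sub_le hf.differentiable hg.differentiable x) (jap_rpow_pos γ x).le]

theorem sq_integral_mul_le {α : Type*} [MeasurableSpace α] {μ : Measure α} [SFinite μ]
    {a b : α → ℝ} (ha : MemLp a 2 μ) (hb : MemLp b 2 μ) :
    (∫ x, a x * b x ∂μ) ^ 2 ≤ (∫ x, a x ^ 2 ∂μ) * ∫ x, b x ^ 2 ∂μ := by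
  have hnonneg : 0 ≤ ∫ p : α × α, (a p.1 * b p.2 - b p.1 * a p.2) ^ 2 ∂μ.prod μ :=
    integral_nonneg fun p ↦ sq_nonneg _
  linarith [integral_sq_mul_sub_mul ha hb]

theorem exists_sq_integral_mul_sqrtM_mul_le_dissipation (γ : ℝ) {p : E3 → ℝ}
    (hp : p.HasTemperateGrowth) : ∃ C, 0 ≤ C ∧ ∀ f, IsSchwartz f →
      (∫ x, p x * sqrtM x * f x) ^ 2 ≤ C * dissipation γ f := by
  have hdual : IsSchwartz fun x ↦ jap x ^ (-(γ / 2)) * p x * sqrtM x :=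
    isSchwartz_sqrtM.mul_left (by fun_prop)
  have hC : 0 ≤ ∫ x, (jap x ^ (-(γ / 2)) * p x * sqrtM x) ^ 2 :=
    integral_nonneg fun x ↦ sq_nonneg _
  refine ⟨_, hC, fun f hf ↦ ?_⟩
  have hweighted : IsSchwartz fun x ↦ jap x ^ (γ / 2) * f x :=
    hf.mul_left (hasTemperateGrowth_jap_rpow _)
  have hpair (x : E3) : p x * sqrtM x * f x =
      jap x ^ (-(γ / 2)) * p x * sqrtM x * (jap x ^ (γ / 2) * f x) := by
    rw [Real.rpow_neg (jap_pos x).le]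
    field_simp [(jap_rpow_pos (γ / 2) x).ne']
  have hsq (x : E3) : (jap x ^ (γ / 2) * f x) ^ 2 = jap x ^ γ * f x ^ 2 := by
    rw [mul_pow, sq (jap x ^ _), jap_rpow_half_mul_self]
  simp only [hpair]
  refine (sq_integral_mul_le hdual.memLp_two hweighted.memLp_two).trans ?_
  simp only [hsq]
  exact mul_le_mul_of_nonneg_left (integral_jap_rpow_mul_sq_le_dissipation γ hf) hC

theorem dissipationDensity_hydrodynamic_le (a : ℝ) (b : Fin 3 → ℝ) (c : ℝ) (x : E3) :
    dissipationDensity (hydrodynamic a b c) x ≤ (a ^ 2 + ∑ i, b i ^ 2 + c ^ 2) *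
      (Mx x * (9 * (1 + ‖x‖ ^ 2) ^ 3)) := by
  have hgrad : ∑ i, (b i + 2 * c * x i) ^ 2 ≤ 2 * ∑ i, b i ^ 2 + 8 * (c ^ 2 * ‖x‖ ^ 2) := by
    simp only [EuclideanSpace.real_norm_sq_eq, Finset.mul_sum, ← Finset.sum_add_distrib]
    exact Finset.sum_le_sum fun i _ ↦ by linarith [sq_nonneg (b i - 2 * c * x i)]
  have hlinear : (∑ i, b i * x i) ^ 2 ≤ (∑ i, b i ^ 2) * ‖x‖ ^ 2 := by
    rw [EuclideanSpace.real_norm_sq_eq]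
    exact Finset.sum_mul_sq_le_sq_mul_sq _ _ _
  have hvalue : (a + (∑ i, b i * x i) + c * ‖x‖ ^ 2) ^ 2 ≤
      3 * (a ^ 2 + (∑ i, b i ^ 2) * ‖x‖ ^ 2 + c ^ 2 * ‖x‖ ^ 4) := by
    linarith [sq_nonneg (a - ∑ i, b i * x i), sq_nonneg (a - c * ‖x‖ ^ 2),
      sq_nonneg (∑ i, b i * x i - c * ‖x‖ ^ 2)]
  have hb : 0 ≤ ∑ i, b i ^ 2 := Finset.sum_nonneg fun i _ ↦ sq_nonneg _
  have hnorm : 0 ≤ 1 + ‖x‖ ^ 2 := by positivity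
  have hA (i : Fin 3) : maxwellDeriv i (hydrodynamic a b c) x ^ 2 =
      (b i + 2 * c * x i) ^ 2 * Mx x := by
    rw [maxwellDeriv_hydrodynamic, mul_pow, sq (sqrtM x), sqrtM_mul_self]
  calc dissipationDensity (hydrodynamic a b c) x
      ≤ (1 + ‖x‖ ^ 2) * ∑ i, maxwellDeriv i (hydrodynamic a b c) x ^ 2 +
          (1 + ‖x‖ ^ 2) * hydrodynamic a b c x ^ 2 := by
        rw [dissipationDensity]
        linarith [wedgeSq_le x fun i ↦ maxwellDeriv i (hydrodynamic a b c) x]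
    _ = Mx x * (1 + ‖x‖ ^ 2) * (∑ i, (b i + 2 * c * x i) ^ 2 +
          (a + (∑ i, b i * x i) + c * ‖x‖ ^ 2) ^ 2) := by
        simp only [hA, ← Finset.sum_mul, hydrodynamic, mul_pow, sq (sqrtM x), sqrtM_mul_self]
        ring
    _ ≤ Mx x * (1 + ‖x‖ ^ 2) * ((a ^ 2 + ∑ i, b i ^ 2 + c ^ 2) *
          (9 * (1 + ‖x‖ ^ 2) ^ 2)) := by
        refine mul_le_mul_of_nonneg_left ?_ (mul_nonneg (Mx_pos x).le hnorm)
        refine (add_le_add hgrad hvalue).trans ?_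
        nlinarith [sq_nonneg a, sq_nonneg c, sq_nonneg ‖x‖, sq_nonneg (‖x‖ ^ 2),
          mul_nonneg (sq_nonneg a) (sq_nonneg ‖x‖), mul_nonneg hb (sq_nonneg ‖x‖),
          mul_nonneg hb (sq_nonneg (‖x‖ ^ 2)), mul_nonneg (sq_nonneg a) (sq_nonneg (‖x‖ ^ 2)),
          mul_nonneg (sq_nonneg c) (sq_nonneg ‖x‖), mul_nonneg (sq_nonneg c) (sq_nonneg (‖x‖ ^ 2))]
    _ = _ := by ring

theorem exists_dissipation_hydrodynamic_le (γ : ℝ) : ∃ C, 0 ≤ C ∧ ∀ a b c,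
    dissipation γ (hydrodynamic a b c) ≤ C * (a ^ 2 + ∑ i, b i ^ 2 + c ^ 2) := by
  refine ⟨∫ x, jap x ^ γ * Mx x * (9 * (1 + ‖x‖ ^ 2) ^ 3),
    integral_nonneg fun x ↦ ?_, fun a b c ↦ ?_⟩
  · positivity [jap_rpow_pos γ x, Mx_pos x]
  rw [← integral_mul_const]
  refine integral_mono
    (integrable_jap_rpow_mul_dissipationDensity γ (isSchwartz_hydrodynamic a b c))
    ((integrable_jap_rpow_mul_Mx_mul γ (by fun_prop)).mul_const _) fun x ↦ ?_
  linarith [mul_le_mul_of_nonneg_left (dissipationDensity_hydrodynamic_le a b c x)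
    (jap_rpow_pos γ x).le]

end DissipationNorm

section Projection

variable {γ : ℝ} {f g u : E3 → ℝ} (a : ℝ) (b : Fin 3 → ℝ) (c : ℝ)

theorem Pv_eq_hydrodynamic (f : E3 → ℝ) :
    Pv f = hydrodynamic (aC f - 3 * cC f) (fun i ↦ bC i f) (cC f) := by
  ext x
  rw [Pv, hydrodynamic]
  ring

theorem integrable_mul_sqrtM_mul {p : E3 → ℝ} (hp : p.HasTemperateGrowth) (hf : IsSchwartz f) :
    Integrable fun x ↦ p x * sqrtM x * f x :=
  (hf.mul_left (hp.mul isSchwartz_sqrtM.hasTemperateGrowth)).integrable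

theorem Pv_sub (hf : IsSchwartz f) (hg : IsSchwartz g) (x : E3) :
    Pv (fun y ↦ f y - g y) x = Pv f x - Pv g x := by
  have hmoment {p : E3 → ℝ} (hp : p.HasTemperateGrowth) :
      ∫ y, p y * sqrtM y * (f y - g y) =
        (∫ y, p y * sqrtM y * f y) - ∫ y, p y * sqrtM y * g y := by
    simp only [mul_sub]
    exact integral_sub (integrable_mul_sqrtM_mul hp hf) (integrable_mul_sqrtM_mul hp hg)
  have ha : aC (fun y ↦ f y - g y) = aC f - aC g := by
    simpa only [aC, one_mul] using hmoment (.const 1)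
  have hb (i : Fin 3) : bC i (fun y ↦ f y - g y) = bC i f - bC i g :=
    hmoment (hasTemperateGrowth_coord i)
  have hc : cC (fun y ↦ f y - g y) = cC f - cC g := by
    rw [cC, hmoment (by fun_prop), mul_sub, cC, cC]
  simp only [Pv, ha, hb, hc, sub_mul, Finset.sum_sub_distrib]
  ring

theorem integral_mul_sqrtM_mul_hydrodynamic {p : E3 → ℝ} (hp : p.HasTemperateGrowth) :
    ∫ x, p x * sqrtM x * hydrodynamic a b c x = a * (∫ x, Mx x * p x) +
      (∑ i, b i * ∫ x, Mx x * (p x * x i)) + c * ∫ x, Mx x * (p x * ‖x‖ ^ 2) := by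
  have hlinear (i : Fin 3) : Integrable fun x ↦ b i * (Mx x * (p x * x i)) :=
    (integrable_Mx_mul (by fun_prop)).const_mul _
  have hconst : Integrable fun x ↦ a * (Mx x * p x) := (integrable_Mx_mul hp).const_mul a
  have hquad : Integrable fun x ↦ c * (Mx x * (p x * ‖x‖ ^ 2)) :=
    (integrable_Mx_mul (by fun_prop)).const_mul c
  have hsum := integrable_finsetSum Finset.univ fun i _ ↦ hlinear i
  simp only [← integral_const_mul]
  rw [← integral_finsetSum _ fun i _ ↦ hlinear i, ← integral_add hconst hsum,
    ← integral_add (hconst.fun_add hsum) hquad]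
  congr! 2 with x
  simp only [hydrodynamic, ← sqrtM_mul_self, Fin.sum_univ_three]
  ring

theorem integral_Mx_mul_norm_sq_sub_mul {p : E3 → ℝ} (hp : p.HasTemperateGrowth) :
    ∫ x, Mx x * ((‖x‖ ^ 2 - 3) * p x) =
      (∫ x, Mx x * (‖x‖ ^ 2 * p x)) - 3 * ∫ x, Mx x * p x := by
  rw [← integral_const_mul,
    ← integral_sub (integrable_Mx_mul (by fun_prop)) ((integrable_Mx_mul hp).const_mul 3)]
  congr! 2
  ring

theorem Pv_hydrodynamic : Pv (hydrodynamic a b c) = hydrodynamic a b c := by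
  have haC : aC (hydrodynamic a b c) = a + 3 * c := by
    have := integral_mul_sqrtM_mul_hydrodynamic a b c (.const 1)
    simp only [one_mul, mul_one, integral_Mx, integral_Mx_mul_coord, integral_Mx_mul_norm_sq,
      mul_zero, Finset.sum_const_zero] at this
    rw [aC, this]
    ring
  have hbC (i : Fin 3) : bC i (hydrodynamic a b c) = b i := by
    rw [bC, integral_mul_sqrtM_mul_hydrodynamic a b c (hasTemperateGrowth_coord i)]
    simp [integral_Mx_mul_coord, integral_Mx_mul_coord_mul_coord,
      integral_Mx_mul_coord_mul_norm_sq]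
  have hcC : cC (hydrodynamic a b c) = c := by
    have hmass : ∫ x, Mx x * (‖x‖ ^ 2 - 3) = 0 := by
      simpa [integral_Mx, integral_Mx_mul_norm_sq] using integral_Mx_mul_norm_sq_sub_mul (.const 1)
    have hmomentum (i : Fin 3) : ∫ x, Mx x * ((‖x‖ ^ 2 - 3) * x i) = 0 := by
      simp [integral_Mx_mul_norm_sq_sub_mul (hasTemperateGrowth_coord i), integral_Mx_mul_coord,
        mul_comm (‖_‖ ^ 2), integral_Mx_mul_coord_mul_norm_sq]
    have henergy : ∫ x, Mx x * ((‖x‖ ^ 2 - 3) * ‖x‖ ^ 2) = 6 := by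
      rw [integral_Mx_mul_norm_sq_sub_mul (p := fun x ↦ ‖x‖ ^ 2) (by fun_prop)]
      simp only [← pow_add, integral_Mx_mul_norm_pow_four, integral_Mx_mul_norm_sq]
      norm_num
    rw [cC, integral_mul_sqrtM_mul_hydrodynamic a b c (by fun_prop), hmass, henergy]
    simp only [hmomentum, mul_zero, Finset.sum_const_zero]
    ring
  ext x
  rw [Pv_eq_hydrodynamic]
  simp only [haC, hbC, hcC, add_sub_cancel_right]

theorem IPv_sub_hydrodynamic (hf : IsSchwartz f) :
    IPv (fun x ↦ f x - hydrodynamic a b c x) = IPv f := by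
  ext x
  rw [IPv, Pv_sub hf (isSchwartz_hydrodynamic a b c), Pv_hydrodynamic, IPv]
  ring

theorem isSchwartz_Pv (f : E3 → ℝ) : IsSchwartz (Pv f) := by
  rw [Pv_eq_hydrodynamic]
  exact isSchwartz_hydrodynamic _ _ _

theorem IsSchwartz.IPv (hf : IsSchwartz f) : IsSchwartz (IPv f) := hf.sub (isSchwartz_Pv f)

theorem exists_dissipation_IPv_le (γ : ℝ) : ∃ C, 0 ≤ C ∧ ∀ f, IsSchwartz f →
    dissipation γ (IPv f) ≤ C * dissipation γ f := by
  obtain ⟨C, hC, hhydrodynamic⟩ := exists_dissipation_hydrodynamic_le γ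
  obtain ⟨A, hA, ha⟩ := exists_sq_integral_mul_sqrtM_mul_le_dissipation γ (.const 1)
  choose B hB hb using fun i ↦
    exists_sq_integral_mul_sqrtM_mul_le_dissipation γ (hasTemperateGrowth_coord i)
  obtain ⟨D, hD, hc⟩ := exists_sq_integral_mul_sqrtM_mul_le_dissipation γ
    (p := fun x ↦ ‖x‖ ^ 2 - 3) (by fun_prop)
  have hsum : 0 ≤ ∑ i, B i := Finset.sum_nonneg fun i _ ↦ hB i
  refine ⟨2 + 2 * (C * (2 * A + ∑ i, B i + D)), by positivity, fun f hf ↦ ?_⟩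
  have haC : aC f ^ 2 ≤ A * dissipation γ f := by simpa only [aC, one_mul] using ha f hf
  have hbC : ∑ i, bC i f ^ 2 ≤ (∑ i, B i) * dissipation γ f := by
    rw [Finset.sum_mul]
    exact Finset.sum_le_sum fun i _ ↦ hb i f hf
  have hcC : 36 * cC f ^ 2 ≤ D * dissipation γ f := by
    rw [cC]
    linarith [hc f hf]
  have hP : dissipation γ (Pv f) ≤ C * ((2 * A + ∑ i, B i + D) * dissipation γ f) := by
    rw [Pv_eq_hydrodynamic]
    refine (hhydrodynamic _ _ _).trans (mul_le_mul_of_nonneg_left ?_ hC)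
    linarith [sq_nonneg (aC f + 3 * cC f), sq_nonneg (cC f)]
  calc dissipation γ (IPv f) ≤ 2 * dissipation γ f + 2 * dissipation γ (Pv f) :=
        dissipation_sub_le γ hf (isSchwartz_Pv f)
    _ ≤ _ := by linarith

end Projection

section Theorem

variable {γ : ℝ} {u : E3 → ℝ}

theorem ipv_Lop_comm (hγ : -5 < γ) {v : E3 → ℝ} (hu : IsSchwartz u) (hv : IsSchwartz v) :
    ipv (Lop γ u) v = ipv u (Lop γ v) := by
  rw [ipv_Lop hγ hu hv, landauDirichlet_comm, ← ipv_Lop hγ hv hu]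
  simp only [ipv, mul_comm]

theorem ipv_Lop_self_nonneg (hγ : -5 < γ) (hu : IsSchwartz u) : 0 ≤ ipv (Lop γ u) u := by
  rw [ipv_Lop hγ hu hu]
  exact landauDirichlet_self_nonneg γ u

theorem exists_eq_hydrodynamic_of_ipv_Lop_self_eq_zero (hγ : -5 < γ) (hγ0 : γ ≤ 0)
    (hu : IsSchwartz u) (h : ipv (Lop γ u) u = 0) : ∃ a b c, u = hydrodynamic a b c := by
  obtain ⟨κ, hκ, hcoercive⟩ := exists_hydrodynamic_mul_dissipation_sub_le hγ hγ0
  obtain ⟨a, b, c, habc⟩ := hcoercive u hu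
  rw [← ipv_Lop hγ hu hu, h] at habc
  exact ⟨a, b, c, sub_eq_zero.1 <| eq_zero_of_dissipation_nonpos
    (hu.sub (isSchwartz_hydrodynamic a b c)) (nonpos_of_mul_nonpos_right habc hκ)⟩

theorem Lop_eq_zero_iff (hγ : -5 < γ) (hγ0 : γ ≤ 0) (hu : IsSchwartz u) :
    (∀ x, Lop γ u x = 0) ↔ ∃ a b c, u = hydrodynamic a b c := by
  refine ⟨fun h ↦ exists_eq_hydrodynamic_of_ipv_Lop_self_eq_zero hγ hγ0 hu (by simp [ipv, h]), ?_⟩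
  rintro ⟨a, b, c, rfl⟩
  exact Lop_hydrodynamic a b c hγ

theorem ipv_Lop_self_eq_zero_iff (hγ : -5 < γ) (hγ0 : γ ≤ 0) (hu : IsSchwartz u) :
    ipv (Lop γ u) u = 0 ↔ ∃ a b c, u = hydrodynamic a b c :=
  ⟨exists_eq_hydrodynamic_of_ipv_Lop_self_eq_zero hγ hγ0 hu,
    fun h ↦ by simp [ipv, (Lop_eq_zero_iff hγ hγ0 hu).2 h]⟩

theorem eq_Pv_iff : u = Pv u ↔ ∃ a b c, u = hydrodynamic a b c := by
  refine ⟨fun h ↦ ⟨_, _, _, h.trans (Pv_eq_hydrodynamic u)⟩, ?_⟩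
  rintro ⟨a, b, c, rfl⟩
  exact (Pv_hydrodynamic a b c).symm

theorem exists_mul_vsigSq_IPv_le (hγ : -5 < γ) (hγ0 : γ ≤ 0) :
    ∃ κ > 0, ∀ u, IsSchwartz u → κ * vsigSq γ 0 0 1 0 (IPv u) ≤ ipv (Lop γ u) u := by
  obtain ⟨κ, hκ, hcoercive⟩ := exists_hydrodynamic_mul_dissipation_sub_le hγ hγ0
  obtain ⟨C, hC, hσ⟩ := exists_vsigSq_le_mul_dissipation hγ hγ0
  obtain ⟨D, hD, hproj⟩ := exists_dissipation_IPv_le γ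
  refine ⟨κ / (C * D + 1), by positivity, fun u hu ↦ ?_⟩
  obtain ⟨a, b, c, habc⟩ := hcoercive u hu
  set f := fun x ↦ u x - hydrodynamic a b c x
  have hf : IsSchwartz f := hu.sub (isSchwartz_hydrodynamic a b c)
  have hbound : vsigSq γ 0 0 1 0 (IPv u) ≤ (C * D + 1) * dissipation γ f :=
    calc vsigSq γ 0 0 1 0 (IPv u) = vsigSq γ 0 0 1 0 (IPv f) := by
          rw [IPv_sub_hydrodynamic a b c hu]
      _ ≤ C * (D * dissipation γ f) :=
        (hσ _ hf.IPv).trans (mul_le_mul_of_nonneg_left (hproj f hf) hC)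
      _ ≤ _ := by linarith [dissipation_nonneg γ f]
  calc κ / (C * D + 1) * vsigSq γ 0 0 1 0 (IPv u)
      ≤ κ / (C * D + 1) * ((C * D + 1) * dissipation γ f) := by gcongr
    _ = κ * dissipation γ f := by field_simp
    _ ≤ ipv (Lop γ u) u := by rwa [ipv_Lop hγ hu hu]

end Theorem

end Landau

theorem linearized_Landau_properties_general (γ : ℝ) (hγ : -5 < γ) (hγ0 : γ ≤ 0) :
    (∀ u v : SchwartzMap E3 ℝ,
        ipv (Lop γ ⇑u) ⇑v = ipv ⇑u (Lop γ ⇑v) ∧ 0 ≤ ipv (Lop γ ⇑u) ⇑u) ∧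
    (∀ u : SchwartzMap E3 ℝ,
        (∀ ξ, Lop γ ⇑u ξ = 0) ↔
          ∃ c₀ c₄ : ℝ, ∃ cb : Fin 3 → ℝ, ∀ ξ : E3,
            u ξ = (c₀ + (∑ i : Fin 3, cb i * ξ i) + c₄ * ‖ξ‖ ^ 2) * sqrtM ξ) ∧
    (∀ u : SchwartzMap E3 ℝ,
        ipv (Lop γ ⇑u) ⇑u = 0 ↔ ∀ ξ, u ξ = Pv ⇑u ξ) ∧
    (∃ κ₀ > (0 : ℝ), ∀ u : SchwartzMap E3 ℝ,
        κ₀ * vsigSq γ 0 0 1 0 (IPv ⇑u) ≤ ipv (Lop γ ⇑u) ⇑u) := by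
  refine ⟨fun u v ↦ ⟨Landau.ipv_Lop_comm hγ (Landau.isSchwartz_coe u) (Landau.isSchwartz_coe v),
    Landau.ipv_Lop_self_nonneg hγ (Landau.isSchwartz_coe u)⟩, fun u ↦ ?_, fun u ↦ ?_, ?_⟩
  · rw [Landau.Lop_eq_zero_iff hγ hγ0 (Landau.isSchwartz_coe u)]
    exact ⟨fun ⟨a, b, c, h⟩ ↦ ⟨a, c, b, congrFun h⟩, fun ⟨a, c, b, h⟩ ↦ ⟨a, b, c, funext h⟩⟩
  · rw [Landau.ipv_Lop_self_eq_zero_iff hγ hγ0 (Landau.isSchwartz_coe u), ← Landau.eq_Pv_iff,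
      funext_iff]
  · obtain ⟨κ, hκ, h⟩ := Landau.exists_mul_vsigSq_IPv_le hγ hγ0
    exact ⟨κ, hκ, fun u ↦ h u (Landau.isSchwartz_coe u)⟩

theorem linearized_Landau_properties (γ : ℝ) (hγ1 : -3 ≤ γ) (hγ2 : γ < -2) :
    (∀ u v : SchwartzMap E3 ℝ,
        ipv (Lop γ ⇑u) ⇑v = ipv ⇑u (Lop γ ⇑v) ∧ 0 ≤ ipv (Lop γ ⇑u) ⇑u) ∧
    (∀ u : SchwartzMap E3 ℝ,
        (∀ ξ, Lop γ ⇑u ξ = 0) ↔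
          ∃ c₀ c₄ : ℝ, ∃ cb : Fin 3 → ℝ, ∀ ξ : E3,
            u ξ = (c₀ + (∑ i : Fin 3, cb i * ξ i) + c₄ * ‖ξ‖ ^ 2) * sqrtM ξ) ∧
    (∀ u : SchwartzMap E3 ℝ,
        ipv (Lop γ ⇑u) ⇑u = 0 ↔ ∀ ξ, u ξ = Pv ⇑u ξ) ∧
    (∃ κ₀ > (0 : ℝ), ∀ u : SchwartzMap E3 ℝ,
        κ₀ * vsigSq γ 0 0 1 0 (IPv ⇑u) ≤ ipv (Lop γ ⇑u) ⇑u) :=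
  linearized_Landau_properties_general γ (by linarith) (by linarith)
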